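/- With S_k(α) = Σ_{δX ≤ p^k ≤ X} (log p) e(p^k α) over primes, for every natural number n, every real k > 1, δ ∈ (0,1), and ε > 0, one has ∫_n^{n+1} |S_k(α)|⁴ dα ≪_{k,δ,ε} (X^{2/k} + X^{4/k − 1}) X^{ε}. -/

import Mathlib

open Real MeasureTheory

/-- `e(x) = exp(2πix)` -/
noncomputable def e (x : ℝ) : ℂ := Complex.exp (2 * Real.pi * Complex.I * x)

/-- `S_k(α) = Σ_{δX ≤ p^k ≤ X} (log p) e(p^k α)`, sum over primes `p`. -/
noncomputable def Sk (δ X k : ℝ) (α : ℝ) : ℂ :=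
  ∑ p ∈ (Finset.Icc 1 (Nat.floor X)).filter
      (fun p : ℕ => p.Prime ∧ δ * X ≤ (p : ℝ) ^ k ∧ (p : ℝ) ^ k ≤ X),
    (Real.log p : ℂ) * e ((p : ℝ) ^ k * α)

lemma e_add (x y : ℝ) : e (x + y) = e x * e y := by
  unfold e; rw [← Complex.exp_add]; push_cast; ring_nf

lemma e_neg (x : ℝ) : e (-x) = (starRingEnd ℂ) (e x) := by
  unfold e; rw [← Complex.exp_conj]; congr 1
  simp only [map_mul, Complex.conj_ofReal, Complex.conj_I, map_ofNat]; push_cast; ring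

lemma e_zero : e 0 = 1 := by simp [e]

lemma e_sub (x y : ℝ) : e (x - y) = e x * (starRingEnd ℂ) (e y) := by
  rw [sub_eq_add_neg, e_add, e_neg]

lemma norm_e (x : ℝ) : ‖e x‖ = 1 := by
  unfold e
  rw [show (2 * Real.pi * Complex.I * x : ℂ) = ((2 * Real.pi * x : ℝ) : ℂ) * Complex.I by push_cast; ring]
  exact Complex.norm_exp_ofReal_mul_I _

@[fun_prop]
lemma continuous_e : Continuous e := by unfold e; fun_prop

lemma hasDerivAt_e (x : ℝ) : HasDerivAt e (2 * Real.pi * Complex.I * e x) x := by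
  unfold e
  have h : HasDerivAt (fun x : ℝ => (2 * Real.pi * Complex.I * x : ℂ)) (2 * Real.pi * Complex.I) x := by
    simpa using (Complex.ofRealCLM.hasDerivAt (x := x)).const_mul (2 * Real.pi * Complex.I : ℂ)
  simpa [mul_comm] using h.cexp

lemma hasDerivAt_e_comp {p : ℝ → ℝ} {p' x : ℝ} (h : HasDerivAt p p' x) :
    HasDerivAt (fun x => e (p x)) (2 * Real.pi * Complex.I * p' * e (p x)) x := by
  have := (hasDerivAt_e (p x)).scomp x h
  rw [show (2 * Real.pi * Complex.I * p' * e (p x) : ℂ) = p' • (2 * Real.pi * Complex.I * e (p x)) by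
    rw [Complex.real_smul]; ring]
  exact this


lemma fourth_expand {ι : Type*} (A : Finset ι) (l : ι → ℝ) (c : ι → ℂ) (y : ℝ) :
    ((‖∑ a ∈ A, c a * e (l a * y)‖ ^ 4 : ℝ) : ℂ) =
      ∑ q ∈ (A ×ˢ A) ×ˢ (A ×ˢ A),
        (c q.1.1 * c q.1.2 * (starRingEnd ℂ) (c q.2.1 * c q.2.2)) *
          e ((l q.1.1 + l q.1.2 - l q.2.1 - l q.2.2) * y) := by
  set S := ∑ a ∈ A, c a * e (l a * y) with hS
  have h1 : ((‖S‖ ^ 4 : ℝ) : ℂ) = (S * S) * (starRingEnd ℂ) (S * S) := by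
    rw [Complex.mul_conj, Complex.normSq_eq_norm_sq, norm_mul]; push_cast; ring
  have h2 : S * S = ∑ q ∈ A ×ˢ A, (c q.1 * e (l q.1 * y)) * (c q.2 * e (l q.2 * y)) := by
    rw [hS, Finset.sum_mul_sum, Finset.sum_product]
  rw [h1, h2, map_sum, Finset.sum_mul_sum, ← Finset.sum_product']
  refine Finset.sum_congr rfl fun q _ => ?_
  have : (l q.1.1 + l q.1.2 - l q.2.1 - l q.2.2) * y
      = (l q.1.1 * y + l q.1.2 * y) + (-(l q.2.1 * y) + -(l q.2.2 * y)) := by ring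
  rw [this, e_add, e_add, e_add, e_neg, e_neg]
  simp only [map_mul]; ring

lemma int_e_double (D y0 T : ℝ) :
    ∫ v in (0:ℝ)..T, ∫ u in (0:ℝ)..T, e (D * (y0 + u - v)) =
      e (D * y0) * ((‖∫ u in (0:ℝ)..T, e (D * u)‖ ^ 2 : ℝ) : ℂ) := by
  have h1 : ∀ u v : ℝ, e (D * (y0 + u - v)) = (e (D * y0) * (starRingEnd ℂ) (e (D * v))) * e (D * u) := by
    intro u v
    rw [show D * (y0 + u - v) = D * y0 + D * u - D * v by ring, e_sub, e_add]; ring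
  simp_rw [h1, intervalIntegral.integral_const_mul, intervalIntegral.integral_mul_const,
    intervalIntegral.integral_const_mul]
  have : ∫ x in (0:ℝ)..T, (starRingEnd ℂ) (e (D * x)) = (starRingEnd ℂ) (∫ x in (0:ℝ)..T, e (D * x)) := by
    rw [intervalIntegral, intervalIntegral, map_sub, integral_conj, integral_conj]
  rw [this, mul_assoc, mul_comm ((starRingEnd ℂ) _), Complex.mul_conj, Complex.normSq_eq_norm_sq]

lemma dbl_eq {ι : Type*} (A : Finset ι) (l : ι → ℝ) (c : ι → ℂ) (y0 T : ℝ) :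
    ((∫ v in (0:ℝ)..T, ∫ u in (0:ℝ)..T, ‖∑ a ∈ A, c a * e (l a * (y0 + u - v))‖ ^ 4 : ℝ) : ℂ) =
      ∑ q ∈ (A ×ˢ A) ×ˢ (A ×ˢ A),
        (c q.1.1 * c q.1.2 * (starRingEnd ℂ) (c q.2.1 * c q.2.2)) *
          (e ((l q.1.1 + l q.1.2 - l q.2.1 - l q.2.2) * y0) *
          ((‖∫ u in (0:ℝ)..T, e ((l q.1.1 + l q.1.2 - l q.2.1 - l q.2.2) * u)‖ ^ 2 : ℝ) : ℂ)) := by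
  rw [← intervalIntegral.integral_ofReal]
  simp_rw [← intervalIntegral.integral_ofReal, fourth_expand]
  have h1 : ∀ v : ℝ, ∫ u in (0:ℝ)..T, ∑ q ∈ (A ×ˢ A) ×ˢ (A ×ˢ A),
        (c q.1.1 * c q.1.2 * (starRingEnd ℂ) (c q.2.1 * c q.2.2)) *
          e ((l q.1.1 + l q.1.2 - l q.2.1 - l q.2.2) * (y0 + u - v)) =
      ∑ q ∈ (A ×ˢ A) ×ˢ (A ×ˢ A),
        (c q.1.1 * c q.1.2 * (starRingEnd ℂ) (c q.2.1 * c q.2.2)) *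
          ∫ u in (0:ℝ)..T, e ((l q.1.1 + l q.1.2 - l q.2.1 - l q.2.2) * (y0 + u - v)) := by
    intro v
    rw [intervalIntegral.integral_finsetSum]
    · simp_rw [intervalIntegral.integral_const_mul]
    · intro q _
      apply Continuous.intervalIntegrable
      fun_prop
  simp_rw [h1]
  rw [intervalIntegral.integral_finsetSum]
  · simp_rw [intervalIntegral.integral_const_mul, int_e_double]
  · intro q _
    apply Continuous.intervalIntegrable
    refine continuous_const.mul ?_
    exact intervalIntegral.continuous_parametric_intervalIntegral_of_continuous' (by fun_prop) _ _

lemma dbl_le {ι : Type*} (A : Finset ι) (l : ι → ℝ) (c : ι → ℂ) (d : ι → ℝ)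
    (h : ∀ a ∈ A, ‖c a‖ ≤ d a) (y0 T : ℝ) (hT : 0 ≤ T) :
    (∫ v in (0:ℝ)..T, ∫ u in (0:ℝ)..T, ‖∑ a ∈ A, c a * e (l a * (y0 + u - v))‖ ^ 4) ≤
    (∫ v in (0:ℝ)..T, ∫ u in (0:ℝ)..T, ‖∑ a ∈ A, (d a : ℂ) * e (l a * (0 + u - v))‖ ^ 4) := by
  have h1 := dbl_eq A l c y0 T
  have h2 := dbl_eq A l (fun a => (d a : ℂ)) 0 T
  have h3 : (∫ v in (0:ℝ)..T, ∫ u in (0:ℝ)..T, ‖∑ a ∈ A, (d a : ℂ) * e (l a * (0 + u - v))‖ ^ 4) =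
      ∑ q ∈ (A ×ˢ A) ×ˢ (A ×ˢ A), (d q.1.1 * d q.1.2 * (d q.2.1 * d q.2.2)) *
        ‖∫ u in (0:ℝ)..T, e ((l q.1.1 + l q.1.2 - l q.2.1 - l q.2.2) * u)‖ ^ 2 := by
    apply Complex.ofReal_injective
    rw [h2]; push_cast
    refine Finset.sum_congr rfl fun q _ => ?_
    simp [e_zero]
  rw [h3]
  refine (le_abs_self _).trans ?_
  rw [← Real.norm_eq_abs, ← Complex.norm_real, h1]
  refine (norm_sum_le _ _).trans (Finset.sum_le_sum fun q hq => ?_)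
  simp only [Finset.mem_product] at hq
  rw [norm_mul, norm_mul (e _), norm_e, one_mul, Complex.norm_real, Real.norm_of_nonneg (by positivity)]
  gcongr
  rw [norm_mul, norm_mul, RCLike.norm_conj, norm_mul]
  have a1 := h _ hq.1.1
  have a2 := h _ hq.1.2
  have a3 := h _ hq.2.1
  have a4 := h _ hq.2.2
  have b1 := (norm_nonneg _).trans a1
  have b2 := (norm_nonneg _).trans a2
  have b3 := (norm_nonneg _).trans a3
  gcongr

lemma dbl_lower (f : ℝ → ℝ) (hf : Continuous f) (h0 : ∀ x, 0 ≤ f x) (y0 T : ℝ) (hT : 0 ≤ T) :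
    T / 2 * ∫ y in y0..(y0 + T / 2), f y ≤ ∫ v in (0:ℝ)..T, ∫ u in (0:ℝ)..T, f (y0 + u - v) := by
  have hc : Continuous fun v : ℝ => ∫ u in (0:ℝ)..T, f (y0 + u - v) :=
    intervalIntegral.continuous_parametric_intervalIntegral_of_continuous' (by fun_prop) _ _
  have h1 : ∫ v in (0:ℝ)..(T/2), ∫ u in (0:ℝ)..T, f (y0 + u - v) ≤
      ∫ v in (0:ℝ)..T, ∫ u in (0:ℝ)..T, f (y0 + u - v) := by
    apply intervalIntegral.integral_mono_interval le_rfl (by linarith) (by linarith)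
    · exact Filter.Eventually.of_forall fun v => intervalIntegral.integral_nonneg hT fun u _ => h0 _
    · exact hc.intervalIntegrable _ _
  refine le_trans ?_ h1
  have h2 : ∫ v in (0:ℝ)..(T/2), (∫ y in y0..(y0 + T / 2), f y) = T / 2 * ∫ y in y0..(y0 + T / 2), f y := by
    simp
  rw [← h2]
  apply intervalIntegral.integral_mono_on (by linarith) (by simp) (hc.intervalIntegrable _ _)
  intro v hv
  have h3 : ∫ y in y0..(y0 + T / 2), f y = ∫ u in v..(v + T/2), f (y0 + u - v) := by
    have := intervalIntegral.integral_comp_add_right (a := v) (b := v + T/2) f (y0 - v)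
    simp only [show ∀ u : ℝ, u + (y0 - v) = y0 + u - v by intro u; ring] at this
    rw [this]; congr 1 <;> ring
  rw [h3]
  apply intervalIntegral.integral_mono_interval hv.1 (by linarith) (by linarith [hv.2])
  · exact Filter.Eventually.of_forall fun v => h0 _
  · apply Continuous.intervalIntegrable; fun_prop

lemma dbl_upper (f : ℝ → ℝ) (hf : Continuous f) (h0 : ∀ x, 0 ≤ f x) (hs : ∀ x, f (-x) = f x) (T : ℝ) (hT : 0 ≤ T) :
    ∫ v in (0:ℝ)..T, ∫ u in (0:ℝ)..T, f (0 + u - v) ≤ T * (2 * ∫ y in (0:ℝ)..T, f y) := by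
  have hc : Continuous fun v : ℝ => ∫ u in (0:ℝ)..T, f (0 + u - v) :=
    intervalIntegral.continuous_parametric_intervalIntegral_of_continuous' (by fun_prop) _ _
  have h2 : ∫ v in (0:ℝ)..T, (2 * ∫ y in (0:ℝ)..T, f y) = T * (2 * ∫ y in (0:ℝ)..T, f y) := by
    simp; ring
  rw [← h2]
  apply intervalIntegral.integral_mono_on hT (hc.intervalIntegrable _ _) (by simp)
  intro v hv
  have h3 : ∫ u in (0:ℝ)..T, f (0 + u - v) = ∫ y in (-v)..(T - v), f y := by
    have := intervalIntegral.integral_comp_sub_right (a := 0) (b := T) f v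
    simp
  have h4 : ∫ y in (-v)..(T - v), f y ≤ ∫ y in (-T)..T, f y := by
    apply intervalIntegral.integral_mono_interval (by linarith [hv.2]) (by linarith [hv.2]) (by linarith [hv.1])
    · exact Filter.Eventually.of_forall fun v => h0 _
    · exact hf.intervalIntegrable _ _
  have h5 : ∫ y in (-T)..0, f y = ∫ y in (0:ℝ)..T, f y := by
    have := intervalIntegral.integral_comp_neg (a := 0) (b := T) f
    simp only [hs, neg_zero] at this
    exact this.symm
  rw [h3]
  refine h4.trans ?_
  rw [← intervalIntegral.integral_add_adjacent_intervals (b := 0) (hf.intervalIntegrable _ _) (hf.intervalIntegrable _ _), h5]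
  linarith

lemma majorant_half {ι : Type*} (A : Finset ι) (l : ι → ℝ) (c : ι → ℂ) (d : ι → ℝ)
    (h : ∀ a ∈ A, ‖c a‖ ≤ d a) (y0 T : ℝ) (hT : 0 < T) :
    ∫ y in y0..(y0 + T / 2), ‖∑ a ∈ A, c a * e (l a * y)‖ ^ 4 ≤
      4 * ∫ y in (0:ℝ)..T, ‖∑ a ∈ A, (d a : ℂ) * e (l a * y)‖ ^ 4 := by
  have h1 := dbl_lower (fun y => ‖∑ a ∈ A, c a * e (l a * y)‖ ^ 4) (by fun_prop) (fun _ => by positivity) y0 T hT.le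
  have h2 := dbl_upper (fun y => ‖∑ a ∈ A, (d a : ℂ) * e (l a * y)‖ ^ 4) (by fun_prop) (fun _ => by positivity)
    (by
      intro x
      congr 1
      rw [← RCLike.norm_conj, map_sum]
      congr 1
      refine Finset.sum_congr rfl fun a _ => ?_
      rw [map_mul, ← e_neg, Complex.conj_ofReal]; congr 2; ring) T hT.le
  have h3 := dbl_le A l c d h y0 T hT.le
  have h4 := h1.trans (h3.trans h2)
  have h5 : T * (∫ y in y0..(y0 + T / 2), ‖∑ a ∈ A, c a * e (l a * y)‖ ^ 4) ≤
      T * (4 * ∫ y in (0:ℝ)..T, ‖∑ a ∈ A, (d a : ℂ) * e (l a * y)‖ ^ 4) := by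
    linarith
  exact le_of_mul_le_mul_left h5 hT

lemma majorant_nat {ι : Type*} (A : Finset ι) (l : ι → ℝ) (c : ι → ℂ) (d : ι → ℝ)
    (h : ∀ a ∈ A, ‖c a‖ ≤ d a) (y0 T : ℝ) (hT : 0 < T) (n : ℕ) :
    ∫ y in y0..(y0 + n * (T / 2)), ‖∑ a ∈ A, c a * e (l a * y)‖ ^ 4 ≤
      n * (4 * ∫ y in (0:ℝ)..T, ‖∑ a ∈ A, (d a : ℂ) * e (l a * y)‖ ^ 4) := by
  induction n with
  | zero => simp
  | succ n ih =>
    have hc : Continuous fun y => ‖∑ a ∈ A, c a * e (l a * y)‖ ^ 4 := by fun_prop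
    rw [← intervalIntegral.integral_add_adjacent_intervals (b := y0 + n * (T / 2)) (hc.intervalIntegrable _ _) (hc.intervalIntegrable _ _)]
    have := majorant_half A l c d h (y0 + n * (T / 2)) T hT
    rw [show y0 + ((n + 1 : ℕ) : ℝ) * (T / 2) = y0 + n * (T / 2) + T / 2 by push_cast; ring]
    push_cast
    linarith

/-- majorant property for fourth moments over intervals -/
lemma majorant {ι : Type*} (A : Finset ι) (l : ι → ℝ) (c : ι → ℂ) (d : ι → ℝ)
    (h : ∀ a ∈ A, ‖c a‖ ≤ d a) (y0 y1 T : ℝ) (hT : 0 < T) (hy : y0 ≤ y1) :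
    ∫ y in y0..y1, ‖∑ a ∈ A, c a * e (l a * y)‖ ^ 4 ≤
      8 * ((y1 - y0) / T + 1) * ∫ y in (0:ℝ)..T, ‖∑ a ∈ A, (d a : ℂ) * e (l a * y)‖ ^ 4 := by
  set n := ⌈(y1 - y0) / (T / 2)⌉₊ with hn
  have hc : Continuous fun y => ‖∑ a ∈ A, c a * e (l a * y)‖ ^ 4 := by fun_prop
  have h1 : y1 ≤ y0 + n * (T / 2) := by
    have := Nat.le_ceil ((y1 - y0) / (T / 2))
    rw [div_le_iff₀ (by positivity)] at this
    rw [← hn] at this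
    linarith
  have h2 : (n : ℝ) ≤ 2 * ((y1 - y0) / T + 1) := by
    have := (Nat.ceil_lt_add_one (a := (y1 - y0) / (T / 2)) (div_nonneg (by linarith) (by positivity))).le
    rw [show (y1 - y0) / (T / 2) = 2 * ((y1 - y0) / T) by field_simp] at this
    rw [hn, show (y1 - y0) / (T / 2) = 2 * ((y1 - y0) / T) by field_simp]
    linarith
  have h3 : ∫ y in y0..y1, ‖∑ a ∈ A, c a * e (l a * y)‖ ^ 4 ≤ ∫ y in y0..(y0 + n * (T / 2)), ‖∑ a ∈ A, c a * e (l a * y)‖ ^ 4 := by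
    apply intervalIntegral.integral_mono_interval le_rfl hy h1
    · exact Filter.Eventually.of_forall fun v => by positivity
    · exact hc.intervalIntegrable _ _
  refine h3.trans ((majorant_nat A l c d h y0 T hT n).trans ?_)
  have h4 : 0 ≤ ∫ y in (0:ℝ)..T, ‖∑ a ∈ A, (d a : ℂ) * e (l a * y)‖ ^ 4 :=
    intervalIntegral.integral_nonneg hT.le fun _ _ => by positivity
  nlinarith


lemma e_nat_mul (n : ℕ) (x : ℝ) : e (n * x) = e x ^ n := by
  unfold e; rw [← Complex.exp_nat_mul]; congr 1; push_cast; ring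

lemma e_int (n : ℤ) : e n = 1 := by
  unfold e
  rw [Complex.exp_eq_one_iff]; exact ⟨n, by push_cast; ring⟩

lemma norm_e_sub_one (x : ℝ) : ‖e x - 1‖ = 2 * |Real.sin (π * x)| := by
  have := Complex.norm_exp_I_mul_ofReal_sub_one (2 * π * x)
  unfold e
  rw [show (2 * Real.pi * Complex.I * x : ℂ) = Complex.I * ((2 * π * x : ℝ) : ℂ) by push_cast; ring, this]
  rw [norm_mul, Real.norm_eq_abs, Real.norm_eq_abs, abs_two]
  congr 3; ring

lemma sin_lower {x : ℝ} (h0 : 0 < x) (h1 : x < 1) : 2 * (x * (1 - x)) ≤ Real.sin (π * x) := by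
  have hp := Real.pi_pos
  rcases le_total x (1/2) with h | h
  · have := Real.mul_le_sin (x := π * x) (by positivity) (by nlinarith)
    have h2 : 2 / π * (π * x) = 2 * x := by field_simp
    nlinarith
  · have := Real.mul_le_sin (x := π * (1 - x)) (by nlinarith) (by nlinarith)
    have h2 : 2 / π * (π * (1 - x)) = 2 * (1 - x) := by field_simp
    have h3 : Real.sin (π * (1 - x)) = Real.sin (π * x) := by
      rw [show π * (1 - x) = π - π * x by ring, Real.sin_pi_sub]
    nlinarith

noncomputable def om (R r : ℕ) : ℝ := if r = 0 then 1 else (1 / r + 1 / ((R : ℝ) - r)) / 2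

lemma om_nonneg {R r : ℕ} (h : r < R) : 0 ≤ om R r := by
  unfold om
  split_ifs
  · norm_num
  · have : (r : ℝ) < R := by exact_mod_cast h
    have : 0 < (R : ℝ) - r := by linarith
    positivity

lemma geom_bound {R r V : ℕ} (hr : r < R) (hV : V ≤ R) :
    ‖∑ μ ∈ Finset.range V, e (-(r * μ / R))‖ ≤ R * om R r := by
  have hR : 0 < (R : ℝ) := by exact_mod_cast (by omega : 0 < R)
  unfold om
  split_ifs with h0
  · subst h0
    refine (norm_sum_le _ _).trans ?_
    simp [norm_e]
    exact_mod_cast hV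
  · have hrR : (r : ℝ) < R := by exact_mod_cast hr
    have hr0 : 0 < (r : ℝ) := by exact_mod_cast Nat.pos_of_ne_zero h0
    have hRr : 0 < (R : ℝ) - r := by linarith
    set z := e (-(r / R : ℝ)) with hz
    have h1 : ∀ μ : ℕ, e (-(r * μ / R)) = z ^ μ := by
      intro μ; rw [hz, ← e_nat_mul]; congr 1; ring
    simp_rw [h1]
    have hx0 : 0 < (r / R : ℝ) := by positivity
    have hx1 : (r / R : ℝ) < 1 := by rw [div_lt_one hR]; exact hrR
    have hs := sin_lower hx0 hx1
    have hxx : 0 < (r / R : ℝ) * (1 - r / R) := mul_pos hx0 (by linarith)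
    have h2 : 4 * ((r / R : ℝ) * (1 - r / R)) ≤ ‖z - 1‖ := by
      rw [hz, norm_e_sub_one, mul_neg, Real.sin_neg, abs_neg]
      have := le_abs_self (Real.sin (π * (r / R)))
      linarith
    have hz1 : z ≠ 1 := by
      intro h; rw [h, sub_self, norm_zero] at h2; linarith
    rw [geom_sum_eq hz1, norm_div]
    have h3 : ‖z ^ V - 1‖ ≤ 2 := by
      refine (norm_sub_le _ _).trans ?_
      rw [norm_pow, hz, norm_e]; norm_num
    calc ‖z ^ V - 1‖ / ‖z - 1‖ ≤ 2 / (4 * ((r / R : ℝ) * (1 - r / R))) := by gcongr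
      _ = R * ((1 / r + 1 / ((R : ℝ) - r)) / 2) := by
        field_simp
        ring

lemma orth {R : ℕ} {ν μ : ℕ} (hν : ν < R) (hμ : μ < R) :
    ∑ r ∈ Finset.range R, e (r * ν / R) * e (-(r * μ / R)) = if ν = μ then (R : ℂ) else 0 := by
  have hR : 0 < (R : ℝ) := by exact_mod_cast (by omega : 0 < R)
  split_ifs with h
  · subst h
    simp_rw [← e_add]
    simp [e_zero]
  · set z := e (((ν : ℝ) - μ) / R) with hz
    have h1 : ∀ r : ℕ, e (r * ν / R) * e (-(r * μ / R)) = z ^ r := by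
      intro r; rw [hz, ← e_nat_mul, ← e_add]; congr 1; ring
    simp_rw [h1]
    have hz1 : z ≠ 1 := by
      intro hh
      rw [hz] at hh
      unfold e at hh
      rw [Complex.exp_eq_one_iff] at hh
      obtain ⟨n, hn⟩ := hh
      have h2 : (((ν : ℝ) - μ) / R : ℝ) = n := by
        have : (2 * π * Complex.I : ℂ) ≠ 0 := Complex.two_pi_I_ne_zero
        have h3 : ((((ν : ℝ) - μ) / R : ℝ) : ℂ) = n := by
          apply mul_left_cancel₀ this
          rw [hn]; ring
        exact_mod_cast h3
      have h4 : (ν : ℝ) - μ = n * R := by rw [← h2]; field_simp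
      have h5 : (ν : ℤ) - μ = n * R := by exact_mod_cast h4
      have : n = 0 := by
        by_contra hn0
        have h6 : 1 ≤ |n| := Int.one_le_abs hn0
        have h7 : |(ν : ℤ) - μ| < R := by rw [abs_lt]; constructor <;> omega
        rw [h5, abs_mul] at h7
        have : |(R : ℤ)| = R := abs_of_nonneg (by omega)
        rw [this] at h7
        nlinarith
      subst this
      simp at h5
      omega
    rw [geom_sum_eq hz1]
    have : z ^ R = 1 := by
      rw [hz, ← e_nat_mul, ← e_int ((ν : ℤ) - μ)]
      congr 1; push_cast; field_simp
    rw [this]; simp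

lemma prefix_bound (R V : ℕ) (hV : V ≤ R) (b : ℕ → ℂ) :
    ‖∑ ν ∈ Finset.range V, b ν‖ ≤
      ∑ r ∈ Finset.range R, om R r * ‖∑ ν ∈ Finset.range R, e (r * ν / R) * b ν‖ := by
  rcases Nat.eq_zero_or_pos R with h0 | hR0
  · subst h0; have : V = 0 := by omega
    subst this; simp
  have hR : 0 < (R : ℝ) := by exact_mod_cast hR0
  have h1 : (R : ℂ) * ∑ ν ∈ Finset.range V, b ν = ∑ r ∈ Finset.range R,
      (∑ μ ∈ Finset.range V, e (-(r * μ / R))) * (∑ ν ∈ Finset.range R, e (r * ν / R) * b ν) := by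
    simp_rw [Finset.sum_mul_sum]
    rw [Finset.sum_comm, Finset.mul_sum]
    refine Finset.sum_congr rfl fun μ hμ => ?_
    rw [Finset.mem_range] at hμ
    rw [Finset.sum_comm]
    have : ∀ ν ∈ Finset.range R, ∑ r ∈ Finset.range R, e (-(r * μ / R)) * (e (r * ν / R) * b ν) =
        if ν = μ then (R : ℂ) * b ν else 0 := by
      intro ν hν
      rw [Finset.mem_range] at hν
      have h := orth hν (by omega : μ < R)
      rw [show ∑ r ∈ Finset.range R, e (-(r * μ / R)) * (e (r * ν / R) * b ν) =
        (∑ r ∈ Finset.range R, e (r * ν / R) * e (-(r * μ / R))) * b ν by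
          rw [Finset.sum_mul]; exact Finset.sum_congr rfl fun _ _ => by ring]
      rw [h]; split_ifs <;> simp
    rw [Finset.sum_congr rfl this, Finset.sum_ite_eq']
    rw [if_pos (by rw [Finset.mem_range]; omega)]
  have h2 : R * ‖∑ ν ∈ Finset.range V, b ν‖ ≤
      R * ∑ r ∈ Finset.range R, om R r * ‖∑ ν ∈ Finset.range R, e (r * ν / R) * b ν‖ := by
    calc R * ‖∑ ν ∈ Finset.range V, b ν‖ = ‖(R : ℂ) * ∑ ν ∈ Finset.range V, b ν‖ := by
          rw [norm_mul]; simp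
      _ ≤ _ := by
          rw [h1, Finset.mul_sum]
          refine (norm_sum_le _ _).trans (Finset.sum_le_sum fun r hr => ?_)
          rw [norm_mul, ← mul_assoc]
          gcongr
          exact geom_bound (Finset.mem_range.mp hr) hV
  exact le_of_mul_le_mul_left h2 hR

lemma om_sum (R : ℕ) : ∑ r ∈ Finset.range R, om R r ≤ 2 + Real.log R := by
  rcases Nat.eq_zero_or_pos R with h0 | hR0
  · subst h0; simp
  obtain ⟨n, rfl⟩ : ∃ n, R = n + 1 := ⟨R - 1, by omega⟩
  rw [Finset.sum_range_succ']
  have h1 : ∑ i ∈ Finset.range n, om (n + 1) (i + 1) = (harmonic n : ℝ) := by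
    have : ∀ i ∈ Finset.range n, om (n + 1) (i + 1) =
        ((((i:ℝ) + 1))⁻¹ + (((n - 1 - i : ℕ) : ℝ) + 1)⁻¹) / 2 := by
      intro i hi
      rw [Finset.mem_range] at hi
      unfold om
      rw [if_neg (by omega)]
      rw [Nat.cast_sub (by omega), Nat.cast_sub (by omega)]
      push_cast
      rw [one_div, one_div]; congr 3; ring
    rw [Finset.sum_congr rfl this, ← Finset.sum_div, Finset.sum_add_distrib]
    have h2 := Finset.sum_range_reflect (fun i : ℕ => ((i : ℝ) + 1)⁻¹) n
    rw [h2]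
    unfold harmonic
    push_cast; ring
  rw [h1]
  have h3 := harmonic_le_one_add_log n
  have h4 : om (n + 1) 0 = 1 := by simp [om]
  rw [h4]
  have h5 : Real.log n ≤ Real.log ((n + 1 : ℕ) : ℝ) := by
    rcases Nat.eq_zero_or_pos n with h | h
    · subst h; simp
    · apply Real.log_le_log (by exact_mod_cast h); push_cast; linarith
  linarith

lemma abel_bound (R : ℕ) (b : ℕ → ℂ) (f : ℝ → ℂ) (t : ℕ → ℝ) (t1 t2 K B : ℝ) (hB0 : 0 ≤ B)
    (hmono : Monotone t) (ht1 : ∀ n, t1 ≤ t n) (ht2 : ∀ n, t n ≤ t2)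
    (hK0 : 0 ≤ K)
    (hf : ∀ x, t1 ≤ x → x ≤ t2 → ‖f x‖ ≤ K)
    (hL : ∀ x y, t1 ≤ x → x ≤ y → y ≤ t2 → ‖f y - f x‖ ≤ K * (y - x))
    (hB : ∀ V ≤ R, ‖∑ ν ∈ Finset.range V, b ν‖ ≤ B) :
    ‖∑ ν ∈ Finset.range R, f (t ν) * b ν‖ ≤ K * (1 + (t2 - t1)) * B := by
  have hK1 : 0 ≤ 1 + (t2 - t1) := by linarith [ht1 0, ht2 0]
  have key := Finset.sum_range_by_parts (fun i => f (t i)) b R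
  simp only [smul_eq_mul] at key
  rw [key]
  refine (norm_sub_le _ _).trans ?_
  have h1 : ‖f (t (R - 1)) * ∑ i ∈ Finset.range R, b i‖ ≤ K * B := by
    rw [norm_mul]
    have := hf _ (ht1 (R-1)) (ht2 (R-1))
    have := hB R le_rfl
    gcongr
  have h2 : ‖∑ i ∈ Finset.range (R - 1), (f (t (i + 1)) - f (t i)) * ∑ i ∈ Finset.range (i + 1), b i‖
      ≤ ∑ i ∈ Finset.range (R - 1), K * (t (i+1) - t i) * B := by
    refine (norm_sum_le _ _).trans (Finset.sum_le_sum fun i hi => ?_)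
    rw [Finset.mem_range] at hi
    rw [norm_mul]
    have h3 := hL _ _ (ht1 i) (hmono (Nat.le_succ i)) (ht2 (i+1))
    have h4 := hB (i + 1) (by omega)
    have : 0 ≤ t (i+1) - t i := sub_nonneg.mpr (hmono (Nat.le_succ i))
    gcongr
  have h3 : ∑ i ∈ Finset.range (R - 1), K * (t (i+1) - t i) * B = K * (t (R-1) - t 0) * B := by
    rw [← Finset.sum_mul, ← Finset.mul_sum, Finset.sum_range_sub]
  have h4 : K * (t (R-1) - t 0) * B ≤ K * (t2 - t1) * B := by
    have := ht1 0
    have := ht2 (R-1)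
    gcongr
  linarith


structure Bump (α β : ℝ) (w w1 w2 : ℝ → ℝ) (W : ℝ) : Prop where
  hα : 0 < α
  hαβ : α < β
  hW : 0 ≤ W
  d1 : ∀ t, HasDerivAt w (w1 t) t
  d2 : ∀ t, HasDerivAt w1 (w2 t) t
  c2 : Continuous w2
  z0 : ∀ t, t ∉ Set.Ioo α β → w t = 0
  z1 : ∀ t, t ∉ Set.Ioo α β → w1 t = 0
  b0 : ∀ t, |w t| ≤ W
  b1 : ∀ t, |w1 t| ≤ W
  b2 : ∀ t, |w2 t| ≤ W

lemma Bump.c0 {α β : ℝ} {w w1 w2 : ℝ → ℝ} {W : ℝ} (B : Bump α β w w1 w2 W) : Continuous w :=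
  continuous_iff_continuousAt.mpr fun t => (B.d1 t).continuousAt
lemma Bump.c1 {α β : ℝ} {w w1 w2 : ℝ → ℝ} {W : ℝ} (B : Bump α β w w1 w2 W) : Continuous w1 :=
  continuous_iff_continuousAt.mpr fun t => (B.d2 t).continuousAt

lemma exists_bump (c : ℝ) (hc0 : 0 < c) (hc1 : c < 1) : ∃ w w1 w2 W, Bump (c/2) 2 w w1 w2 W ∧
    (∀ t, c ≤ t → t ≤ 1 → w t = 1) ∧ (∀ t, 0 ≤ w t) := by
  let f : ContDiffBump ((c+1)/2 : ℝ) := ⟨(1-c)/2, 1/2 - c/4, by linarith, by linarith⟩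
  have hf : ContDiff ℝ 2 f := f.contDiff
  have hf1 : ContDiff ℝ 1 (deriv f) := by
    have : ContDiff ℝ (1 + 1) f := by norm_num; exact hf
    exact (contDiff_succ_iff_deriv.mp this).2.2
  have hf2 : Continuous (deriv (deriv f)) := hf1.continuous_deriv le_rfl
  have hs0 : HasCompactSupport f := f.hasCompactSupport
  have hs1 : HasCompactSupport (deriv f) := hs0.deriv
  have hs2 : HasCompactSupport (deriv (deriv f)) := hs1.deriv
  obtain ⟨W0, hW0⟩ := hf.continuous.bounded_above_of_compact_support hs0
  obtain ⟨W1, hW1⟩ := hf1.continuous.bounded_above_of_compact_support hs1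
  obtain ⟨W2, hW2⟩ := hf2.bounded_above_of_compact_support hs2
  have hz : ∀ t, t ∉ Set.Ioo (c/2) 2 → t ∉ tsupport f := by
    intro t ht htt
    rw [f.tsupport_eq, Metric.mem_closedBall, Real.dist_eq, abs_le] at htt
    apply ht
    have : f.rOut = 1/2 - c/4 := rfl
    rw [this] at htt
    constructor <;> linarith [htt.1, htt.2]
  refine ⟨f, deriv f, deriv (deriv f), max W0 (max W1 W2), ⟨by linarith, by linarith, ?_, ?_, ?_, hf2, ?_, ?_, ?_, ?_, ?_⟩, ?_, ?_⟩
  · exact ((norm_nonneg _).trans (hW0 0)).trans (le_max_left _ _)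
  · exact fun t => (hf.differentiable (by norm_num) t).hasDerivAt
  · exact fun t => (hf1.differentiable (by norm_num) t).hasDerivAt
  · exact fun t ht => image_eq_zero_of_notMem_tsupport (hz t ht)
  · intro t ht
    by_contra h
    exact hz t ht (support_deriv_subset h)
  · exact fun t => (hW0 t).trans (le_max_left _ _)
  · exact fun t => (hW1 t).trans ((le_max_left _ _).trans (le_max_right _ _))
  · exact fun t => (hW2 t).trans ((le_max_right _ _).trans (le_max_right _ _))
  · intro t h1 h2
    apply f.one_of_mem_closedBall
    have : f.rIn = (1-c)/2 := rfl
    rw [Metric.mem_closedBall, Real.dist_eq, abs_le, this]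
    constructor <;> linarith
  · exact fun t => f.nonneg

lemma ibp_e (a b : ℝ) (p h u u' : ℝ → ℝ) (hab : a ≤ b)
    (hp : ∀ t ∈ Set.Icc a b, HasDerivAt p (h t) t) (hh : ContinuousOn h (Set.Icc a b))
    (hu : ∀ t ∈ Set.Icc a b, HasDerivAt u (u' t) t) (hu' : ContinuousOn u' (Set.Icc a b))
    (ha : u a = 0) (hb : u b = 0) :
    ∫ t in a..b, ((u t * h t : ℝ) : ℂ) * e (p t) =
      - (1 / (2 * π * Complex.I)) * ∫ t in a..b, (u' t : ℂ) * e (p t) := by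
  have hpc : ContinuousOn p (Set.Icc a b) := fun t ht => (hp t ht).continuousAt.continuousWithinAt
  have key := intervalIntegral.integral_mul_deriv_eq_deriv_mul (a := a) (b := b)
    (u := fun t => (u t : ℂ)) (u' := fun t => (u' t : ℂ))
    (v := fun t => e (p t)) (v' := fun t => 2 * π * Complex.I * h t * e (p t))
    (by rw [Set.uIcc_of_le hab]; exact fun t ht => (hu t ht).ofReal_comp)
    (by rw [Set.uIcc_of_le hab]; exact fun t ht => hasDerivAt_e_comp (hp t ht))
    (by
      apply ContinuousOn.intervalIntegrable
      rw [Set.uIcc_of_le hab]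
      exact Complex.continuous_ofReal.comp_continuousOn hu')
    (by
      apply ContinuousOn.intervalIntegrable
      rw [Set.uIcc_of_le hab]
      exact (continuousOn_const.mul (Complex.continuous_ofReal.comp_continuousOn hh)).mul
        (continuous_e.comp_continuousOn hpc))
  simp only [ha, hb, Complex.ofReal_zero, zero_mul, sub_zero, zero_sub] at key
  have hne : (2 * π * Complex.I : ℂ) ≠ 0 := Complex.two_pi_I_ne_zero
  have h2 : ∫ t in a..b, (u t : ℂ) * (2 * π * Complex.I * h t * e (p t)) =
      (2 * π * Complex.I) * ∫ t in a..b, ((u t * h t : ℝ) : ℂ) * e (p t) := by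
    rw [← intervalIntegral.integral_const_mul]
    congr 1; ext t; push_cast; ring
  rw [h2] at key
  field_simp
  linear_combination key

lemma nonstat {α β : ℝ} {w w1 w2 : ℝ → ℝ} {W : ℝ} (B : Bump α β w w1 w2 W) (p h h1 h2 : ℝ → ℝ)
    (hp : ∀ t ∈ Set.Icc α β, HasDerivAt p (h t) t)
    (hh : ∀ t ∈ Set.Icc α β, HasDerivAt h (h1 t) t)
    (hh1 : ∀ t ∈ Set.Icc α β, HasDerivAt h1 (h2 t) t)
    (hc : ContinuousOn h2 (Set.Icc α β)) (H K : ℝ) (hH : 0 < H) (hK : 0 ≤ K)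
    (bH : ∀ t ∈ Set.Icc α β, H ≤ |h t|)
    (b1 : ∀ t ∈ Set.Icc α β, |h1 t| ≤ K * H)
    (b2 : ∀ t ∈ Set.Icc α β, |h2 t| ≤ K * H) :
    ‖∫ t in α..β, (w t : ℂ) * e (p t)‖ ≤ (β - α) * (W * (1 + 4 * K + 3 * K ^ 2)) / H ^ 2 := by
  have hne : ∀ t ∈ Set.Icc α β, h t ≠ 0 := by
    intro t ht h0; have := bH t ht; rw [h0, abs_zero] at this; linarith
  have hab := B.hαβ.le
  have zα := B.z0 α (by simp)
  have zβ := B.z0 β (by simp)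
  have z1α := B.z1 α (by simp)
  have z1β := B.z1 β (by simp)
  have ch : ContinuousOn h (Set.Icc α β) := fun t ht => (hh t ht).continuousAt.continuousWithinAt
  have ch1 : ContinuousOn h1 (Set.Icc α β) := fun t ht => (hh1 t ht).continuousAt.continuousWithinAt
  have s1 := ibp_e α β p h (fun t => w t / h t) (fun t => (w1 t * h t - w t * h1 t) / h t ^ 2) hab hp ch
    (fun t ht => (B.d1 t).div (hh t ht) (hne t ht))
    (((B.c1.continuousOn.mul ch).sub (B.c0.continuousOn.mul ch1)).div (ch.pow 2) fun t ht => pow_ne_zero _ (hne t ht))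
    (by simp [zα]) (by simp [zβ])
  have s2 := ibp_e α β p h (fun t => (w1 t * h t - w t * h1 t) / h t ^ 3)
    (fun t => ((w2 t * h t + w1 t * h1 t - (w1 t * h1 t + w t * h2 t)) * h t ^ 3 -
      (w1 t * h t - w t * h1 t) * (3 * h t ^ 2 * h1 t)) / (h t ^ 3) ^ 2) hab hp ch
    (fun t ht => by
      have := ((((B.d2 t).mul (hh t ht)).sub ((B.d1 t).mul (hh1 t ht))).div ((hh t ht).pow 3)
        (pow_ne_zero _ (hne t ht)))
      refine HasDerivAt.congr_deriv this ?_
      simp)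
    (by
      have c0 := B.c0.continuousOn (s := Set.Icc α β)
      have c1 := B.c1.continuousOn (s := Set.Icc α β)
      have c2 := B.c2.continuousOn (s := Set.Icc α β)
      refine ContinuousOn.div (by fun_prop) (by fun_prop) fun t ht => pow_ne_zero _ (pow_ne_zero _ (hne t ht)))
    (by simp [zα, z1α]) (by simp [zβ, z1β])
  have e1 : ∫ t in α..β, (w t : ℂ) * e (p t) = ∫ t in α..β, ((w t / h t * h t : ℝ) : ℂ) * e (p t) := by
    apply intervalIntegral.integral_congr
    intro t ht
    rw [Set.uIcc_of_le hab] at ht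
    simp only
    rw [div_mul_cancel₀ _ (hne t ht)]
  have e2 : ∫ t in α..β, (((w1 t * h t - w t * h1 t) / h t ^ 2 : ℝ) : ℂ) * e (p t) =
      ∫ t in α..β, (((w1 t * h t - w t * h1 t) / h t ^ 3 * h t : ℝ) : ℂ) * e (p t) := by
    apply intervalIntegral.integral_congr
    intro t ht
    rw [Set.uIcc_of_le hab] at ht
    simp only
    congr 2
    have := hne t ht
    field_simp
  rw [e1, s1, e2, s2]
  have hpi : ‖-(1 / (2 * (π : ℂ) * Complex.I))‖ ≤ 1 := by
    rw [norm_neg, norm_div, norm_mul, norm_mul, Complex.norm_I, Complex.norm_real, Real.norm_of_nonneg pi_pos.le]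
    simp only [norm_one, Complex.norm_ofNat, mul_one]
    rw [div_le_one (by positivity)]
    linarith [Real.pi_gt_three]
  rw [norm_mul, norm_mul]
  have hb : ‖∫ t in α..β, ((((w2 t * h t + w1 t * h1 t - (w1 t * h1 t + w t * h2 t)) * h t ^ 3 -
      (w1 t * h t - w t * h1 t) * (3 * h t ^ 2 * h1 t)) / (h t ^ 3) ^ 2 : ℝ) : ℂ) * e (p t)‖ ≤
      (W * (1 + 4 * K + 3 * K ^ 2)) / H ^ 2 * |β - α| := by
    apply intervalIntegral.norm_integral_le_of_norm_le_const
    intro t ht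
    rw [Set.uIoc_of_le hab] at ht
    have ht' : t ∈ Set.Icc α β := ⟨ht.1.le, ht.2⟩
    rw [norm_mul, norm_e, mul_one, Complex.norm_real, Real.norm_eq_abs]
    have hn := hne t ht'
    have ee : ((w2 t * h t + w1 t * h1 t - (w1 t * h1 t + w t * h2 t)) * h t ^ 3 -
      (w1 t * h t - w t * h1 t) * (3 * h t ^ 2 * h1 t)) / (h t ^ 3) ^ 2 =
      (w2 t - 3 * w1 t * (h1 t / h t) - w t * (h2 t / h t) + 3 * w t * (h1 t / h t) ^ 2) / h t ^ 2 := by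
      field_simp
      ring
    rw [ee, abs_div, abs_pow]
    have hH2 := bH t ht'
    have q1 : |h1 t / h t| ≤ K := by
      rw [abs_div, div_le_iff₀ (by linarith)]
      exact (b1 t ht').trans (by gcongr)
    have q2 : |h2 t / h t| ≤ K := by
      rw [abs_div, div_le_iff₀ (by linarith)]
      exact (b2 t ht').trans (by gcongr)
    gcongr
    · have := B.hW; positivity
    · have a0 := B.b0 t
      have a1 := B.b1 t
      have a2 := B.b2 t
      have hW := B.hW
      have m1 : |3 * w1 t * (h1 t / h t)| ≤ 3 * W * K := by
        rw [abs_mul, abs_mul, abs_of_pos (by norm_num : (0:ℝ) < 3)]; gcongr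
      have m2 : |w t * (h2 t / h t)| ≤ W * K := by rw [abs_mul]; gcongr
      have m3 : |3 * w t * (h1 t / h t) ^ 2| ≤ 3 * W * K ^ 2 := by
        rw [abs_mul, abs_mul, abs_of_pos (by norm_num : (0:ℝ) < 3), abs_pow]; gcongr
      have t1 := abs_add_le (w2 t - 3 * w1 t * (h1 t / h t) - w t * (h2 t / h t)) (3 * w t * (h1 t / h t) ^ 2)
      have t2 := abs_sub (w2 t - 3 * w1 t * (h1 t / h t)) (w t * (h2 t / h t))
      have t3 := abs_sub (w2 t) (3 * w1 t * (h1 t / h t))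
      nlinarith
  rw [abs_of_nonneg (by linarith)] at hb
  calc _ ≤ 1 * (1 * ((W * (1 + 4 * K + 3 * K ^ 2)) / H ^ 2 * (β - α))) := by gcongr
    _ = _ := by ring


noncomputable def In (k M α β : ℝ) (w : ℝ → ℝ) (Y : ℝ) (ν : ℤ) : ℂ :=
  ∫ t in α..β, (w t : ℂ) * e (Y * t ^ k - ν * M * t)

noncomputable def Sw (k M β : ℝ) (w : ℝ → ℝ) (Y : ℝ) : ℂ :=
  ∑ m ∈ Finset.range (⌊β * M⌋₊ + 1), (w (m / M) : ℂ) * e (((m : ℝ) / M) ^ k * Y)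

lemma decay {α β : ℝ} {w w1 w2 : ℝ → ℝ} {W : ℝ} (B : Bump α β w w1 w2 W) (k : ℝ) (hk : 1 < k) :
    ∃ C > 0, ∀ Y0 Y M : ℝ, 0 < Y0 → Y0 ≤ Y → Y ≤ 2 * Y0 → 0 < M → ∀ ν : ℤ,
      ((ν : ℝ) * M < k * α ^ (k - 1) / 2 * Y0 ∨ 4 * k * β ^ (k - 1) * Y0 < (ν : ℝ) * M) →
      ‖In k M α β w Y ν‖ ≤ C / (Y0 + |(ν : ℝ)| * M) ^ 2 := by
  have hα := B.hα
  have hβ := B.hα.trans B.hαβ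
  have hpos : ∀ t ∈ Set.Icc α β, 0 < t := fun t ht => hα.trans_le ht.1
  have cont : ∀ q : ℝ, ContinuousOn (fun t : ℝ => t ^ q) (Set.Icc α β) := fun q =>
    ContinuousOn.rpow_const continuousOn_id fun t ht => Or.inl (hpos t ht).ne'
  obtain ⟨K1, hK1⟩ := isCompact_Icc.exists_bound_of_continuousOn
    (((cont (k-2)).const_smul (k * (k - 1))))
  obtain ⟨K2, hK2⟩ := isCompact_Icc.exists_bound_of_continuousOn
    (((cont (k-3)).const_smul (k * (k - 1) * (k - 2))))
  set c1 := k * α ^ (k - 1) / 2 with hc1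
  have hc1p : 0 < c1 := by have := Real.rpow_pos_of_pos hα (k-1); positivity
  set C2 := 4 * k * β ^ (k - 1) with hC2
  have hcC : c1 ≤ C2 := by
    have h1 : α ^ (k-1) ≤ β ^ (k-1) := Real.rpow_le_rpow hα.le B.hαβ.le (by linarith)
    have := Real.rpow_pos_of_pos hα (k-1)
    rw [hc1, hC2]; nlinarith
  obtain ⟨κ, hκ, hκ1, hκ2⟩ : ∃ κ > 0, κ ≤ c1 / 4 ∧ κ ≤ 1 / 4 :=
    ⟨min (c1/4) (1/4), by positivity, min_le_left _ _, min_le_right _ _⟩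
  set K := 2 * (max 0 (max K1 K2)) / κ with hK
  have hK0 : 0 ≤ K := by positivity
  refine ⟨(β - α) * (W * (1 + 4 * K + 3 * K ^ 2)) / κ ^ 2 + 1, ?_, ?_⟩
  · have := B.hW
    have : 0 ≤ β - α := by linarith [B.hαβ]
    positivity
  intro Y0 Y M hY0 hY1 hY2 hM ν hν
  have hY : 0 < Y := by linarith
  have hH : 0 < κ * (Y0 + |(ν:ℝ)| * M) := by positivity
  have main := nonstat B (fun t => Y * t ^ k - ν * M * t) (fun t => Y * (k * t ^ (k - 1)) - ν * M)
    (fun t => Y * (k * (k - 1) * t ^ (k - 2))) (fun t => Y * (k * (k - 1) * (k - 2) * t ^ (k - 3)))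
    (fun t ht => by
      have h1 := (Real.hasDerivAt_rpow_const (x := t) (p := k) (Or.inl (hpos t ht).ne')).const_mul Y
      have h2 := (hasDerivAt_id t).const_mul ((ν : ℝ) * M)
      refine HasDerivAt.congr_deriv (h1.sub h2) ?_
      simp)
    (fun t ht => by
      have h1 := ((Real.hasDerivAt_rpow_const (x := t) (p := k - 1) (Or.inl (hpos t ht).ne')).const_mul (k)).const_mul Y
      have h2 := h1.sub_const ((ν : ℝ) * M)
      refine h2.congr_deriv ?_
      rw [show k - 1 - 1 = k - 2 by ring]; ring)
    (fun t ht => by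
      have h1 := ((Real.hasDerivAt_rpow_const (x := t) (p := k - 2) (Or.inl (hpos t ht).ne')).const_mul (k * (k - 1))).const_mul Y
      refine h1.congr_deriv ?_
      rw [show k - 2 - 1 = k - 3 by ring]; ring)
    ((continuousOn_const.mul (cont (k-3))).const_smul Y) (κ * (Y0 + |(ν:ℝ)| * M)) K hH hK0
    (fun t ht => by
      have l1 : α ^ (k - 1) ≤ t ^ (k-1) := Real.rpow_le_rpow hα.le ht.1 (by linarith)
      have l2 : t ^ (k - 1) ≤ β ^ (k-1) := Real.rpow_le_rpow (hpos t ht).le ht.2 (by linarith)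
      have l0 := Real.rpow_pos_of_pos hα (k-1)
      have l1' : Y0 * (2 * c1) ≤ Y * (k * t ^ (k-1)) := by
        have : 2 * c1 ≤ k * t ^ (k-1) := by rw [hc1]; nlinarith
        exact mul_le_mul hY1 this (by positivity) hY.le
      have l2' : Y * (k * t ^ (k-1)) ≤ (2 * Y0) * (C2 / 4) := by
        have : k * t ^ (k-1) ≤ C2 / 4 := by rw [hC2]; nlinarith
        have l3 := l0.trans_le l1
        exact mul_le_mul hY2 this (by positivity) (by positivity)
      have hν0 : 0 ≤ |(ν:ℝ)| * M := by positivity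
      have g1 : κ * (Y0 + |(ν:ℝ)| * M) ≤ c1 / 4 * Y0 + 1 / 4 * (|(ν:ℝ)| * M) := by
        rw [mul_add]; gcongr
      rcases hν with h | h
      · refine le_trans ?_ (le_abs_self _)
        rcases abs_cases (ν:ℝ) with ⟨h1, h2⟩ | ⟨h1, h2⟩
        · rw [h1] at g1 ⊢; nlinarith
        · rw [h1] at g1 ⊢; nlinarith
      · refine le_trans ?_ (neg_le_abs _)
        have : 0 < C2 * Y0 := by positivity
        have hν' : 0 < (ν : ℝ) := by
          by_contra hh
          push Not at hh
          nlinarith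
        rw [abs_of_pos hν'] at g1 ⊢
        nlinarith)
    (fun t ht => by
      have := hK1 t ht
      simp only [Real.norm_eq_abs] at this
      rw [abs_mul, abs_of_pos hY, hK]
      have h3 : 2 * max 0 (max K1 K2) / κ * (κ * (Y0 + |(ν:ℝ)| * M)) = 2 * max 0 (max K1 K2) * (Y0 + |(ν:ℝ)| * M) := by
        field_simp
      rw [h3]
      have h4 : |k * (k-1) * t ^ (k-2)| ≤ max 0 (max K1 K2) := this.trans ((le_max_left _ _).trans (le_max_right _ _))
      calc _ ≤ (2 * Y0) * max 0 (max K1 K2) := by gcongr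
        _ ≤ _ := by
          have : 0 ≤ max 0 (max K1 K2) * (|(ν:ℝ)| * M) := by positivity
          linarith)
    (fun t ht => by
      have := hK2 t ht
      simp only [Real.norm_eq_abs] at this
      rw [abs_mul, abs_of_pos hY, hK]
      have h3 : 2 * max 0 (max K1 K2) / κ * (κ * (Y0 + |(ν:ℝ)| * M)) = 2 * max 0 (max K1 K2) * (Y0 + |(ν:ℝ)| * M) := by
        field_simp
      rw [h3]
      have h4 : |k * (k-1) * (k-2) * t ^ (k-3)| ≤ max 0 (max K1 K2) := this.trans ((le_max_right _ _).trans (le_max_right _ _))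
      calc _ ≤ (2 * Y0) * max 0 (max K1 K2) := by gcongr
        _ ≤ _ := by
          have : 0 ≤ max 0 (max K1 K2) * (|(ν:ℝ)| * M) := by positivity
          linarith)
  refine main.trans ?_
  have hh : 0 < Y0 + |(ν:ℝ)| * M := by positivity
  rw [mul_pow, ← div_div]
  gcongr
  linarith

lemma fourier_In {α β : ℝ} {w w1 w2 : ℝ → ℝ} {W : ℝ} (B : Bump α β w w1 w2 W) (k M Y : ℝ)
    (hM : 0 < M) (ν : ℤ) :
    FourierTransform.fourier (fun x : ℝ => (w (x / M) : ℂ) * e ((x / M) ^ k * Y)) (ν : ℝ) = M * In k M α β w Y ν := by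
  rw [Real.fourier_real_eq_integral_exp_smul]
  have h1 : ∀ v : ℝ, Complex.exp (↑(-2 * π * v * ν) * Complex.I) • ((w (v / M) : ℂ) * e ((v / M) ^ k * Y)) =
      (fun t : ℝ => (w t : ℂ) * e (Y * t ^ k - ν * M * t)) (v / M) := by
    intro v
    have : Complex.exp (↑(-2 * π * v * ν) * Complex.I) = e (-(ν * v)) := by
      unfold e; congr 1; push_cast; ring
    rw [this, smul_eq_mul]
    simp only
    rw [mul_left_comm, ← e_add]
    congr 2
    field_simp
    ring
  simp_rw [h1]
  rw [Measure.integral_comp_div (fun t : ℝ => (w t : ℂ) * e (Y * t ^ k - ν * M * t)) M,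
    abs_of_pos hM, Complex.real_smul]
  congr 1
  unfold In
  rw [intervalIntegral.integral_of_le B.hαβ.le]
  symm
  apply setIntegral_eq_integral_of_forall_compl_eq_zero
  intro t ht
  rw [B.z0 t (fun h => ht ⟨h.1, h.2.le⟩)]
  simp

lemma poisson {α β : ℝ} {w w1 w2 : ℝ → ℝ} {W : ℝ} (B : Bump α β w w1 w2 W) (k M Y : ℝ)
    (hk : 1 < k) (hM : 0 < M) (hs : Summable (fun ν : ℤ => In k M α β w Y ν)) :
    Sw k M β w Y = M * ∑' ν : ℤ, In k M α β w Y ν := by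
  set f : ℝ → ℂ := fun x : ℝ => (w (x / M) : ℂ) * e ((x / M) ^ k * Y) with hf
  have hfc : Continuous f := by
    have h1 := B.c0
    have h2 : Continuous fun x : ℝ => x ^ k := Real.continuous_rpow_const (by linarith)
    have h3 : Continuous fun x : ℝ => (x / M) ^ k := h2.comp (continuous_id.div_const M)
    rw [hf]; fun_prop
  have hz : ∀ x, x / M ∉ Set.Ioo α β → f x = 0 := by
    intro x hx; rw [hf]; simp [B.z0 _ hx]
  have key := Real.tsum_eq_tsum_fourier_of_rpow_decay_of_summable hfc (b := 2) (by norm_num)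
    (by
      apply Asymptotics.IsBigO.of_bound 0
      have : (Set.Icc (α * M) (β * M))ᶜ ∈ Filter.cocompact ℝ := isCompact_Icc.compl_mem_cocompact
      filter_upwards [this] with x hx
      rw [hz x]
      · simp
      · intro h
        apply hx
        constructor
        · have := (lt_div_iff₀ hM).mp h.1; linarith
        · have := (div_lt_iff₀ hM).mp h.2; linarith)
    (by
      simp_rw [hf, fourier_In B k M Y hM]
      exact hs.mul_left _) 0
  have h0 : ∀ n : ℤ, fourier n ((0:ℝ) : UnitAddCircle) = 1 := by intro n; simp
  simp only [zero_add, h0, mul_one] at key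
  have h4 : ∑' n : ℤ, FourierTransform.fourier f (n:ℝ) = M * ∑' ν : ℤ, In k M α β w Y ν := by
    rw [← tsum_mul_left]
    congr 1; ext ν
    rw [hf, fourier_In B k M Y hM]
  rw [← h4, ← key]
  unfold Sw
  rw [tsum_eq_sum (s := (Finset.range (⌊β * M⌋₊ + 1)).map Nat.castEmbedding)]
  · rw [Finset.sum_map]
    rfl
  · intro n hn
    apply hz
    intro h
    apply hn
    rw [Finset.mem_map]
    have hn0 : 0 < (n:ℝ) := by
      have := B.hα.trans h.1
      exact (div_pos_iff_of_pos_right hM).mp this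
    have hn1 : 0 < n := by exact_mod_cast hn0
    refine ⟨n.toNat, ?_, by simp; omega⟩
    rw [Finset.mem_range, Nat.lt_succ_iff]
    apply Nat.le_floor
    have := (div_lt_iff₀ hM).mp h.2
    have h2 : ((n.toNat : ℕ) : ℝ) = (n:ℝ) := by
      have : ((n.toNat : ℕ) : ℤ) = n := Int.toNat_of_nonneg hn1.le
      exact_mod_cast this
    rw [h2]; linarith

/-- the stationary frequencies -/
noncomputable def Nset (c1 C2 Y0 M : ℝ) : Finset ℕ :=
  (Finset.range (⌊C2 * Y0 / M⌋₊ + 1)).filter (fun ν => c1 * Y0 / M ≤ ν)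

lemma sw_approx {α β : ℝ} {w w1 w2 : ℝ → ℝ} {W : ℝ} (B : Bump α β w w1 w2 W) (k : ℝ) (hk : 1 < k) :
    ∃ C > 0, ∀ Y0 Y M : ℝ, 0 < Y0 → Y0 ≤ Y → Y ≤ 2 * Y0 → 0 < M →
      ‖Sw k M β w Y - M * ∑ ν ∈ Nset (k * α ^ (k - 1) / 2) (4 * k * β ^ (k - 1)) Y0 M, In k M α β w Y ν‖
        ≤ C * (M / Y0 ^ 2 + 1 / M) := by
  obtain ⟨C, hC, hd⟩ := decay B k hk
  have hsum : Summable fun n : ℤ => 1 / (n:ℝ) ^ 2 := Real.summable_one_div_int_pow.mpr (by norm_num)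
  set Z := ∑' n : ℤ, 1 / (n:ℝ) ^ 2 with hZ
  have hZ0 : 0 ≤ Z := tsum_nonneg fun n => by positivity
  refine ⟨C * (1 + Z), by positivity, ?_⟩
  intro Y0 Y M hY0 hY1 hY2 hM
  set c1 := k * α ^ (k - 1) / 2
  set C2 := 4 * k * β ^ (k - 1)
  set s : Finset ℤ := (Nset c1 C2 Y0 M).map Nat.castEmbedding with hs
  set I := In k M α β w Y with hI
  set J : ℤ → ℂ := fun ν => if ν ∈ s then 0 else I ν with hJ
  set g : ℤ → ℝ := fun ν => C * ((if ν = 0 then 1 / Y0 ^ 2 else 0) + 1 / M ^ 2 * (1 / (ν:ℝ) ^ 2)) with hg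
  have hgs : HasSum g (C * (1 / Y0 ^ 2 + 1 / M ^ 2 * Z)) := by
    apply HasSum.mul_left
    apply HasSum.add
    · exact hasSum_ite_eq 0 (1 / Y0 ^ 2)
    · exact hsum.hasSum.mul_left _
  have hJg : ∀ ν, ‖J ν‖ ≤ g ν := by
    intro ν
    simp only [hJ, hg]
    split_ifs with h1 h2 h2
    · simp; positivity
    · simp; positivity
    all_goals
      have hν : (ν : ℝ) * M < c1 * Y0 ∨ C2 * Y0 < (ν : ℝ) * M := by
        by_contra hh
        push Not at hh
        apply h1
        have hn0 : 0 ≤ (ν : ℝ) := by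
          have : 0 < α ^ (k-1) := Real.rpow_pos_of_pos B.hα _
          have : 0 < c1 * Y0 := by positivity
          by_contra hc
          push Not at hc
          nlinarith [hh.1]
        have hn1 : 0 ≤ ν := by exact_mod_cast hn0
        have hn2 : ((ν.toNat : ℕ) : ℝ) = (ν:ℝ) := by
          have : ((ν.toNat : ℕ) : ℤ) = ν := Int.toNat_of_nonneg hn1
          exact_mod_cast this
        rw [hs, Finset.mem_map]
        refine ⟨ν.toNat, ?_, by simp; omega⟩
        rw [Nset, Finset.mem_filter, Finset.mem_range, Nat.lt_succ_iff, hn2]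
        refine ⟨Nat.le_floor ?_, ?_⟩
        · rw [hn2, le_div_iff₀ hM]; exact hh.2
        · rw [div_le_iff₀ hM]; exact hh.1
      refine (hd Y0 Y M hY0 hY1 hY2 hM ν hν).trans ?_
    · subst h2; simp [div_eq_mul_inv]
    · rw [div_eq_mul_one_div, zero_add]
      gcongr
      have hn : 0 < |(ν:ℝ)| := by
        rw [abs_pos]; exact_mod_cast h2
      rw [one_div_mul_one_div_rev]
      apply one_div_le_one_div_of_le
      · have := sq_abs (ν:ℝ); positivity
      · rw [← sq_abs (ν:ℝ), ← mul_pow]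
        apply pow_le_pow_left₀ (by positivity); linarith
  have hJs : Summable J := Summable.of_norm_bounded hgs.summable hJg
  have hfs : HasSum (fun ν : ℤ => if ν ∈ s then I ν else 0) (∑ ν ∈ s, I ν) := by
    have : HasSum (fun ν : ℤ => if ν ∈ s then I ν else 0) (∑ ν ∈ s, if ν ∈ s then I ν else 0) :=
      hasSum_sum_of_ne_finset_zero (by intro b hb; simp [hb])
    convert this using 1
    exact Finset.sum_congr rfl fun x hx => by simp [hx]
  have hIs : HasSum I (∑' ν, J ν + ∑ ν ∈ s, I ν) := by
    convert hJs.hasSum.add hfs using 1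
    ext ν
    simp only [hJ]
    split_ifs <;> simp
  rw [poisson B k M Y hk hM hIs.summable, ← hI, hIs.tsum_eq, ← mul_sub, hs, Finset.sum_map]
  simp only [Nat.castEmbedding_apply, add_sub_cancel_right]
  rw [norm_mul, Complex.norm_real, Real.norm_of_nonneg hM.le]
  have := tsum_of_norm_bounded hgs hJg
  calc M * ‖∑' ν, J ν‖ ≤ M * (C * (1 / Y0 ^ 2 + 1 / M ^ 2 * Z)) := by gcongr
    _ = C * (M / Y0 ^ 2 + 1 / M * Z) := by field_simp
    _ ≤ C * ((1 + Z) * (M / Y0 ^ 2 + 1 / M)) := by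
      gcongr
      have h1 : 0 ≤ M / Y0 ^ 2 := by positivity
      have h2 : 0 ≤ 1 / M := by positivity
      nlinarith
    _ = _ := by ring


noncomputable def g1 (k s : ℝ) : ℝ := k * s ^ (k - 1) - k
noncomputable def g0 (k s : ℝ) : ℝ := s ^ k - k * s
noncomputable def chi (k Y0 s : ℝ) : ℝ := 1 / (1 + Y0 * g1 k s ^ 2)
noncomputable def vv (k Y0 s : ℝ) : ℝ := Y0 * g1 k s / (1 + Y0 * g1 k s ^ 2)
noncomputable def vd (k Y0 s : ℝ) : ℝ :=
  Y0 * (k * (k - 1) * s ^ (k - 2)) * (1 - Y0 * g1 k s ^ 2) / (1 + Y0 * g1 k s ^ 2) ^ 2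

noncomputable def Phi (k Y0 Y : ℝ) (w w1 : ℝ → ℝ) (s τ : ℝ) : ℂ :=
  ((τ ^ (1:ℝ) * w (τ * s) * chi k Y0 s : ℝ) : ℂ) - (1 / (2 * π * Complex.I)) *
    ((τ ^ (2 - k) * w1 (τ * s) * (vv k Y0 s / Y) + τ ^ (1 - k) * w (τ * s) * (vd k Y0 s / Y) : ℝ) : ℂ)

lemma hasDerivAt_g0 (k : ℝ) {s : ℝ} (hs : 0 < s) : HasDerivAt (g0 k) (g1 k s) s := by
  have h1 := (Real.hasDerivAt_rpow_const (x := s) (p := k) (Or.inl hs.ne'))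
  have h2 := (hasDerivAt_id s).const_mul k
  refine HasDerivAt.congr_deriv (h1.sub h2) ?_
  simp [g1]

lemma hasDerivAt_g1 (k : ℝ) {s : ℝ} (hs : 0 < s) : HasDerivAt (g1 k) (k * (k - 1) * s ^ (k - 2)) s := by
  have h1 := ((Real.hasDerivAt_rpow_const (x := s) (p := k - 1) (Or.inl hs.ne')).const_mul k).sub_const k
  refine HasDerivAt.congr_deriv h1 ?_
  rw [show k - 1 - 1 = k - 2 by ring]; ring

lemma hasDerivAt_vv (k : ℝ) {Y0 s : ℝ} (hY : 0 ≤ Y0) (hs : 0 < s) :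
    HasDerivAt (vv k Y0) (vd k Y0 s) s := by
  have hg := hasDerivAt_g1 k hs
  have hne : 1 + Y0 * g1 k s ^ 2 ≠ 0 := by positivity
  have := (hg.const_mul Y0).div (((hg.pow 2).const_mul Y0).const_add 1) hne
  refine HasDerivAt.congr_deriv this ?_
  simp only [vd, Pi.pow_apply]
  congr 1
  push_cast
  ring

lemma contOn_rpow (q : ℝ) {a b : ℝ} (ha : 0 < a) : ContinuousOn (fun t : ℝ => t ^ q) (Set.Icc a b) :=
  ContinuousOn.rpow_const continuousOn_id fun t ht => Or.inl (ha.trans_le ht.1).ne'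

lemma contOn_g1 (k : ℝ) {a b : ℝ} (ha : 0 < a) : ContinuousOn (g1 k) (Set.Icc a b) :=
  fun s hs => (hasDerivAt_g1 k (ha.trans_le hs.1)).continuousAt.continuousWithinAt
lemma contOn_g0 (k : ℝ) {a b : ℝ} (ha : 0 < a) : ContinuousOn (g0 k) (Set.Icc a b) :=
  fun s hs => (hasDerivAt_g0 k (ha.trans_le hs.1)).continuousAt.continuousWithinAt
lemma contOn_vv (k : ℝ) {Y0 a b : ℝ} (hY : 0 ≤ Y0) (ha : 0 < a) : ContinuousOn (vv k Y0) (Set.Icc a b) :=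
  fun s hs => (hasDerivAt_vv k hY (ha.trans_le hs.1)).continuousAt.continuousWithinAt
lemma contOn_chi (k : ℝ) {Y0 a b : ℝ} (hY : 0 ≤ Y0) (ha : 0 < a) : ContinuousOn (chi k Y0) (Set.Icc a b) := by
  have := contOn_g1 k (b := b) ha
  unfold chi
  refine ContinuousOn.div continuousOn_const (by fun_prop) fun s _ => by positivity
lemma contOn_vd (k : ℝ) {Y0 a b : ℝ} (hY : 0 ≤ Y0) (ha : 0 < a) : ContinuousOn (vd k Y0) (Set.Icc a b) := by
  have h1 := contOn_g1 k (b := b) ha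
  have h2 := contOn_rpow (k - 2) (b := b) ha
  unfold vd
  refine ContinuousOn.div (by fun_prop) (by fun_prop) fun s _ => by positivity

lemma contOn_Phi (k : ℝ) {Y0 Y a b τ : ℝ} {w w1 : ℝ → ℝ} (hw : Continuous w) (hw1 : Continuous w1)
    (hY : 0 ≤ Y0) (ha : 0 < a) : ContinuousOn (fun s => Phi k Y0 Y w w1 s τ) (Set.Icc a b) := by
  have h1 := contOn_chi k (b := b) hY ha
  have h2 := contOn_vv k (b := b) hY ha
  have h3 := contOn_vd k (b := b) hY ha
  unfold Phi
  refine ContinuousOn.sub (Complex.continuous_ofReal.comp_continuousOn ?_)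
    (continuousOn_const.mul (Complex.continuous_ofReal.comp_continuousOn ?_))
  · fun_prop
  · fun_prop

lemma in_rep {α β : ℝ} {w w1 w2 : ℝ → ℝ} {W : ℝ} (B : Bump α β w w1 w2 W) (k : ℝ)
    {a b τ Y0 Y M : ℝ} {ν : ℤ} (ha : 0 < a) (hab : a ≤ b) (hτ : 0 < τ) (h1 : a * τ ≤ α) (h2 : β ≤ b * τ)
    (hY0 : 0 ≤ Y0) (hY : 0 < Y) (hν : k * Y * τ ^ (k - 1) = ν * M) :
    In k M α β w Y ν = ∫ s in a..b, Phi k Y0 Y w w1 s τ * e (Y * τ ^ k * g0 k s) := by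
  have hpos : ∀ s ∈ Set.Icc a b, 0 < s := fun s hs => ha.trans_le hs.1
  set Λ := Y * τ ^ k with hΛ
  have hτk : 0 < τ ^ k := Real.rpow_pos_of_pos hτ k
  have hΛ0 : 0 < Λ := by positivity
  have step1 : In k M α β w Y ν = ∫ s in a..b, ((τ * w (τ * s) : ℝ) : ℂ) * e (Λ * g0 k s) := by
    unfold In
    have e1 : ∫ t in α..β, (w t : ℂ) * e (Y * t ^ k - ν * M * t) =
        ∫ t in (τ * a)..(τ * b), (w t : ℂ) * e (Y * t ^ k - ν * M * t) := by
      rw [intervalIntegral.integral_of_le B.hαβ.le, intervalIntegral.integral_of_le (by nlinarith)]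
      symm
      apply setIntegral_eq_of_subset_of_forall_sdiff_eq_zero measurableSet_Ioc
      · intro t ht
        constructor
        · linarith [ht.1]
        · linarith [ht.2]
      · intro t ht
        rw [B.z0 t (fun h => ht.2 ⟨h.1, h.2.le⟩)]; simp
    rw [e1, ← intervalIntegral.smul_integral_comp_mul_left, Complex.real_smul,
      ← intervalIntegral.integral_const_mul]
    apply intervalIntegral.integral_congr
    intro s hs
    rw [Set.uIcc_of_le hab] at hs
    simp only
    rw [Complex.ofReal_mul, ← mul_assoc]
    congr 2
    rw [Real.mul_rpow hτ.le (hpos s hs).le, ← hν, hΛ, g0]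
    have : τ ^ (k - 1) * τ = τ ^ k := by
      rw [Real.rpow_sub_one hτ.ne']; field_simp
    rw [← this]; ring
  rw [step1]
  have cp : ContinuousOn (fun s => e (Λ * g0 k s)) (Set.Icc a b) :=
    continuous_e.comp_continuousOn (continuousOn_const.mul (contOn_g0 k ha))
  have cw := B.c0
  have cw1 := B.c1
  have cχ := contOn_chi k (b := b) hY0 ha
  have cv := contOn_vv k (b := b) hY0 ha
  have cv' := contOn_vd k (b := b) hY0 ha
  have cg := contOn_g1 k (b := b) ha
  have ibp := ibp_e a b (fun s => Λ * g0 k s) (fun s => Λ * g1 k s)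
    (fun s => w (τ * s) * vv k Y0 s * (τ / Λ))
    (fun s => (w1 (τ * s) * τ * vv k Y0 s + w (τ * s) * vd k Y0 s) * (τ / Λ)) hab
    (fun s hs => (hasDerivAt_g0 k (hpos s hs)).const_mul Λ)
    (by fun_prop)
    (fun s hs => by
      have hd : HasDerivAt (fun s => w (τ * s)) (w1 (τ * s) * τ) s := by
        have := (B.d1 (τ * s)).comp s ((hasDerivAt_id s).const_mul τ)
        refine HasDerivAt.congr_deriv this ?_
        simp
      exact (hd.mul (hasDerivAt_vv k hY0 (hpos s hs))).mul_const _)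
    (by fun_prop)
    (by rw [B.z0 (τ * a) (fun h => by have := h.1; linarith)]; simp)
    (by rw [B.z0 (τ * b) (fun h => by have := h.2; linarith)]; simp)
  have split1 : ∫ s in a..b, ((τ * w (τ * s) : ℝ) : ℂ) * e (Λ * g0 k s) =
      (∫ s in a..b, ((τ * w (τ * s) * chi k Y0 s : ℝ) : ℂ) * e (Λ * g0 k s)) +
      ∫ s in a..b, ((w (τ * s) * vv k Y0 s * (τ / Λ) * (Λ * g1 k s) : ℝ) : ℂ) * e (Λ * g0 k s) := by
    rw [← intervalIntegral.integral_add]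
    · apply intervalIntegral.integral_congr
      intro s hs
      simp only
      rw [← add_mul, ← Complex.ofReal_add]
      congr 2
      have hne : 1 + Y0 * g1 k s ^ 2 ≠ 0 := by positivity
      rw [chi, vv]
      field_simp
    · apply ContinuousOn.intervalIntegrable
      rw [Set.uIcc_of_le hab]
      exact (Complex.continuous_ofReal.comp_continuousOn (by fun_prop)).mul cp
    · apply ContinuousOn.intervalIntegrable
      rw [Set.uIcc_of_le hab]
      exact (Complex.continuous_ofReal.comp_continuousOn (by fun_prop)).mul cp
  rw [split1, ibp, ← intervalIntegral.integral_const_mul, ← intervalIntegral.integral_add]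
  · apply intervalIntegral.integral_congr
    intro s hs
    simp only
    rw [← mul_assoc, ← add_mul]
    congr 1
    rw [Phi, Real.rpow_one, neg_mul, ← sub_eq_add_neg]
    congr 3
    have q1 : τ ^ (1 - k) = τ / τ ^ k := by rw [Real.rpow_sub hτ, Real.rpow_one]
    have q2 : τ ^ (2 - k) = τ ^ 2 / τ ^ k := by rw [Real.rpow_sub hτ, Real.rpow_two]
    rw [q1, q2, hΛ]
    field_simp
  · apply ContinuousOn.intervalIntegrable
    rw [Set.uIcc_of_le hab]
    exact (Complex.continuous_ofReal.comp_continuousOn (by fun_prop)).mul cp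
  · apply ContinuousOn.intervalIntegrable
    rw [Set.uIcc_of_le hab]
    refine continuousOn_const.mul ((Complex.continuous_ofReal.comp_continuousOn ?_).mul cp)
    fun_prop


lemma lip_aux (τ1 τ2 q W S : ℝ) (h1 : 0 < τ1) (hW : 0 ≤ W) (hS : 0 ≤ S) :
    ∃ K > 0, ∀ (u u' : ℝ → ℝ), (∀ t, HasDerivAt u (u' t) t) → (∀ t, |u t| ≤ W) → (∀ t, |u' t| ≤ W) →
      ∀ s, |s| ≤ S → (∀ τ ∈ Set.Icc τ1 τ2, |τ ^ q * u (τ * s)| ≤ K) ∧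
        (∀ x y, τ1 ≤ x → x ≤ y → y ≤ τ2 → |y ^ q * u (y * s) - x ^ q * u (x * s)| ≤ K * (y - x)) := by
  obtain ⟨A, hA⟩ := isCompact_Icc.exists_bound_of_continuousOn (contOn_rpow q (b := τ2) h1)
  obtain ⟨A', hA'⟩ := isCompact_Icc.exists_bound_of_continuousOn (contOn_rpow (q - 1) (b := τ2) h1)
  have B : ∀ τ ∈ Set.Icc τ1 τ2, |τ ^ q| ≤ |A| := fun τ hτ => (hA τ hτ).trans (le_abs_self _)
  have B' : ∀ τ ∈ Set.Icc τ1 τ2, |τ ^ (q-1)| ≤ |A'| := fun τ hτ => (hA' τ hτ).trans (le_abs_self _)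
  refine ⟨|A| * W + |q| * |A'| * W + |A| * (W * S) + 1, by positivity, ?_⟩
  intro u u' hu bu bu' s hs
  constructor
  · intro τ hτ
    rw [abs_mul]
    have : |τ ^ q| * |u (τ * s)| ≤ |A| * W := by
      have := B τ hτ; have := bu (τ * s); gcongr
    have h2 : 0 ≤ |q| * |A'| * W := by positivity
    have h3 : 0 ≤ |A| * (W * S) := by positivity
    linarith
  · intro x y hx hxy hy
    have := Convex.norm_image_sub_le_of_norm_hasDerivWithin_le (f := fun τ => τ ^ q * u (τ * s))
      (f' := fun τ => q * τ ^ (q - 1) * u (τ * s) + τ ^ q * (u' (τ * s) * s))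
      (C := |A| * W + |q| * |A'| * W + |A| * (W * S) + 1) (s := Set.Icc τ1 τ2)
      (fun τ hτ => by
        have d1 := (Real.hasDerivAt_rpow_const (x := τ) (p := q) (Or.inl (h1.trans_le hτ.1).ne'))
        have d2 : HasDerivAt (fun τ => u (τ * s)) (u' (τ * s) * s) τ := by
          have := (hu (τ * s)).comp τ ((hasDerivAt_id τ).mul_const s)
          refine HasDerivAt.congr_deriv this ?_
          simp
        exact (d1.mul d2).hasDerivWithinAt)
      (fun τ hτ => by
        refine (norm_add_le _ _).trans ?_
        rw [Real.norm_eq_abs, Real.norm_eq_abs, abs_mul, abs_mul, abs_mul, abs_mul]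
        have a1 : |q| * |τ ^ (q-1)| * |u (τ * s)| ≤ |q| * |A'| * W := by
          have := B' τ hτ; have := bu (τ * s); gcongr
        have a2 : |τ ^ q| * (|u' (τ * s)| * |s|) ≤ |A| * (W * S) := by
          have := B τ hτ; have := bu' (τ * s); gcongr
        have a3 : 0 ≤ |A| * W := by positivity
        linarith)
      (convex_Icc _ _) (x := x) (y := y) ⟨hx, hxy.trans hy⟩ ⟨hx.trans hxy, hy⟩
    rw [Real.norm_eq_abs, Real.norm_eq_abs, abs_of_nonneg (by linarith : 0 ≤ y - x)] at this
    exact this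

lemma chi_pos (k : ℝ) {Y0 s : ℝ} (hY : 0 ≤ Y0) : 0 < chi k Y0 s := by unfold chi; positivity

lemma vv_le (k : ℝ) {Y0 Y s : ℝ} (hY0 : 0 < Y0) (hY : Y0 ≤ Y) : |vv k Y0 s / Y| ≤ |g1 k s| * chi k Y0 s := by
  have h : 0 < Y := by linarith
  have h2 : 0 < 1 + Y0 * g1 k s ^ 2 := by positivity
  rw [vv, chi, abs_div, abs_div, abs_mul, abs_of_pos hY0, abs_of_pos h, abs_of_pos h2, div_le_iff₀ h, mul_one_div, div_mul_eq_mul_div]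
  apply div_le_div_of_nonneg_right _ h2.le
  nlinarith [abs_nonneg (g1 k s)]

lemma vd_le (k : ℝ) {Y0 Y s : ℝ} (hY0 : 0 < Y0) (hY : Y0 ≤ Y) :
    |vd k Y0 s / Y| ≤ |k * (k - 1) * s ^ (k - 2)| * chi k Y0 s := by
  have h : 0 < Y := by linarith
  set D := 1 + Y0 * g1 k s ^ 2 with hD
  have h2 : 0 < D := by positivity
  have h3 : |1 - Y0 * g1 k s ^ 2| ≤ D := by
    rw [abs_le]; constructor <;> [skip; skip] <;> have : 0 ≤ Y0 * g1 k s ^ 2 := by positivity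
    · linarith
    · linarith
  rw [vd, chi, ← hD, abs_div, abs_div, abs_mul, abs_mul Y0, abs_of_pos hY0, abs_of_pos h, abs_of_pos (by positivity : 0 < D ^ 2),
    div_le_iff₀ h, div_le_iff₀ (by positivity)]
  set Q := |k * (k - 1) * s ^ (k - 2)|
  have hQ : 0 ≤ Q := abs_nonneg _
  calc Y0 * Q * |1 - Y0 * g1 k s ^ 2| ≤ Y * Q * D := by gcongr
    _ = _ := by field_simp

lemma Phi_lip {α β : ℝ} {w w1 w2 : ℝ → ℝ} {W : ℝ} (B : Bump α β w w1 w2 W) (k a b τ1 τ2 : ℝ)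
    (ha : 0 < a) (hab : a ≤ b) (hτ1 : 0 < τ1) :
    ∃ K > 0, ∀ Y0 Y : ℝ, 0 < Y0 → Y0 ≤ Y → ∀ s ∈ Set.Icc a b,
      (∀ τ, τ1 ≤ τ → τ ≤ τ2 → ‖Phi k Y0 Y w w1 s τ‖ ≤ K * chi k Y0 s) ∧
      (∀ x y, τ1 ≤ x → x ≤ y → y ≤ τ2 →
        ‖Phi k Y0 Y w w1 s y - Phi k Y0 Y w w1 s x‖ ≤ K * chi k Y0 s * (y - x)) := by
  have hb : 0 ≤ b := by linarith
  obtain ⟨K1, hK1, H1⟩ := lip_aux τ1 τ2 1 W b hτ1 B.hW hb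
  obtain ⟨K2, hK2, H2⟩ := lip_aux τ1 τ2 (2 - k) W b hτ1 B.hW hb
  obtain ⟨K3, hK3, H3⟩ := lip_aux τ1 τ2 (1 - k) W b hτ1 B.hW hb
  obtain ⟨G1, hG1⟩ := isCompact_Icc.exists_bound_of_continuousOn (contOn_g1 k (b := b) ha)
  obtain ⟨G2, hG2⟩ := isCompact_Icc.exists_bound_of_continuousOn
    (continuousOn_const.mul (contOn_rpow (k-2) (b := b) ha) : ContinuousOn (fun s => k * (k-1) * s ^ (k-2)) _)
  have hpi : ‖(1 / (2 * (π : ℂ) * Complex.I))‖ ≤ 1 := by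
    rw [norm_div, norm_mul, norm_mul, Complex.norm_I, Complex.norm_real, Real.norm_of_nonneg pi_pos.le]
    simp only [norm_one, Complex.norm_ofNat, mul_one]
    rw [div_le_one (by positivity)]
    linarith [Real.pi_gt_three]
  refine ⟨K1 + K2 * |G1| + K3 * |G2|, by positivity, ?_⟩
  intro Y0 Y hY0 hY s hs
  have hχ := chi_pos k (s := s) hY0.le
  have hs' : |s| ≤ b := by rw [abs_of_nonneg (by linarith [hs.1])]; exact hs.2
  obtain ⟨A1, A1'⟩ := H1 w w1 B.d1 B.b0 B.b1 s hs'
  obtain ⟨A2, A2'⟩ := H2 w1 w2 B.d2 B.b1 B.b2 s hs'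
  obtain ⟨A3, A3'⟩ := H3 w w1 B.d1 B.b0 B.b1 s hs'
  have v1 : |vv k Y0 s / Y| ≤ |G1| * chi k Y0 s :=
    (vv_le k hY0 hY).trans (mul_le_mul_of_nonneg_right ((hG1 s hs).trans (le_abs_self _)) hχ.le)
  have v2 : |vd k Y0 s / Y| ≤ |G2| * chi k Y0 s :=
    (vd_le k hY0 hY).trans (mul_le_mul_of_nonneg_right ((hG2 s hs).trans (le_abs_self _)) hχ.le)
  have gen : ∀ x1 x2 x3 t : ℝ, 0 ≤ t → |x1| ≤ K1 * t → |x2| ≤ K2 * t → |x3| ≤ K3 * t →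
      ‖((x1 * chi k Y0 s : ℝ) : ℂ) - (1 / (2 * (π:ℂ) * Complex.I)) *
        ((x2 * (vv k Y0 s / Y) + x3 * (vd k Y0 s / Y) : ℝ) : ℂ)‖ ≤ (K1 + K2 * |G1| + K3 * |G2|) * chi k Y0 s * t := by
    intro x1 x2 x3 t ht h1 h2 h3
    refine (norm_sub_le _ _).trans ?_
    rw [norm_mul, Complex.norm_real, Complex.norm_real, Real.norm_eq_abs, Real.norm_eq_abs, abs_mul, abs_of_pos hχ]
    have m1 : |x1| * chi k Y0 s ≤ K1 * t * chi k Y0 s := by gcongr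
    have m2 : |x2 * (vv k Y0 s / Y)| ≤ K2 * t * (|G1| * chi k Y0 s) := by rw [abs_mul]; gcongr
    have m3 : |x3 * (vd k Y0 s / Y)| ≤ K3 * t * (|G2| * chi k Y0 s) := by rw [abs_mul]; gcongr
    have m4 := abs_add_le (x2 * (vv k Y0 s / Y)) (x3 * (vd k Y0 s / Y))
    have m5 : ‖(1 / (2 * (π : ℂ) * Complex.I))‖ * |x2 * (vv k Y0 s / Y) + x3 * (vd k Y0 s / Y)| ≤
      1 * |x2 * (vv k Y0 s / Y) + x3 * (vd k Y0 s / Y)| := by gcongr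
    linarith
  constructor
  · intro τ h1 h2
    have := gen _ _ _ 1 zero_le_one ((A1 τ ⟨h1, h2⟩).trans (by linarith)) ((A2 τ ⟨h1, h2⟩).trans (by linarith))
      ((A3 τ ⟨h1, h2⟩).trans (by linarith))
    rw [mul_one] at this
    exact this
  · intro x y h1 h2 h3
    have := gen _ _ _ (y - x) (by linarith) (A1' x y h1 h2 h3) (A2' x y h1 h2 h3) (A3' x y h1 h2 h3)
    convert this using 2
    unfold Phi
    push_cast
    ring

/-- weighted dual sum -/
noncomputable def Gs (R : ℕ) (N : Finset ℕ) (M' k' y : ℝ) : ℝ :=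
  ∑ r ∈ Finset.range R, om R r * ‖∑ ν ∈ N, e (r * ν / R) * e (((ν : ℝ) / M') ^ k' * y)‖

lemma continuous_Gs (R : ℕ) (N : Finset ℕ) (M' k' : ℝ) : Continuous (Gs R N M' k') := by
  unfold Gs; fun_prop

lemma stat_bound {α β : ℝ} {w w1 w2 : ℝ → ℝ} {W : ℝ} (B : Bump α β w w1 w2 W) (k : ℝ) (hk : 1 < k) :
    ∃ a b K : ℝ, 0 < a ∧ a < 1 ∧ 1 < b ∧ 0 < K ∧
    ∀ c1 C2, c1 = k * α ^ (k - 1) / 2 → C2 = 4 * k * β ^ (k - 1) →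
    ∀ Y0 Y M : ℝ, 0 < Y0 → Y0 ≤ Y → Y ≤ 2 * Y0 → 0 < M →
      ‖∑ ν ∈ Nset c1 C2 Y0 M, In k M α β w Y ν‖
        ≤ K * ∫ s in a..b, chi k Y0 s * Gs (⌊C2 * Y0 / M⌋₊ + 1) (Nset c1 C2 Y0 M) (C2 * Y0 / M) (k / (k - 1))
          (g0 k s * ((C2 * Y0 / k) ^ (k / (k - 1)) * Y ^ (1 - k / (k - 1)))) := by
  have hα := B.hα
  have hβ := hα.trans B.hαβ
  have hk1 : 0 < k - 1 := by linarith
  set q : ℝ := 4 ^ (1 / (k - 1)) with hq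
  have hq1 : 1 < q := Real.one_lt_rpow (by norm_num) (by positivity)
  have hq0 : 0 < q := by linarith
  have hqk : q ^ (k - 1) = 4 := by
    rw [hq, ← Real.rpow_mul (by norm_num), one_div_mul_cancel hk1.ne', Real.rpow_one]
  set τ1 := α / q with hτ1
  set τ2 := β * q with hτ2
  have hτposa : 0 < τ1 := by positivity
  have hτ12 : τ1 ≤ τ2 := by
    have : τ1 ≤ α := div_le_self hα.le hq1.le
    have : β ≤ τ2 := by rw [hτ2]; nlinarith
    linarith [B.hαβ]
  have hτposb : 0 < τ2 := by linarith
  have p1 : τ1 ^ (k-1) = α ^ (k-1) / 4 := by rw [hτ1, Real.div_rpow hα.le hq0.le, hqk]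
  have p2 : τ2 ^ (k-1) = β ^ (k-1) * 4 := by rw [hτ2, Real.mul_rpow hβ.le hq0.le, hqk]
  set a := α / τ2 with haa
  set b := β / τ1 with hbb
  have ha : 0 < a := by positivity
  have ha1 : a < 1 := by
    rw [haa, div_lt_one hτposb, hτ2]; nlinarith [B.hαβ]
  have hb1 : 1 < b := by
    rw [hbb, one_lt_div hτposa, hτ1, div_lt_iff₀ hq0]; nlinarith [B.hαβ]
  have hab : a ≤ b := by linarith
  obtain ⟨K, hK, HK⟩ := Phi_lip B k a b τ1 τ2 ha hab hτposa
  refine ⟨a, b, K * (1 + (τ2 - τ1)), ha, ha1, hb1, by have := sub_nonneg.mpr hτ12; positivity, ?_⟩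
  intro c1 C2 hc1 hC2 Y0 Y M hY0 hY1 hY2 hM
  have hY : 0 < Y := by linarith
  set k' := k / (k - 1) with hk'
  set N := Nset c1 C2 Y0 M with hN
  set R := ⌊C2 * Y0 / M⌋₊ + 1 with hR
  set D := (C2 * Y0 / k) ^ k' * Y ^ (1 - k') with hD
  have hC2p : 0 < C2 := by rw [hC2]; have := Real.rpow_pos_of_pos hβ (k-1); positivity
  set t0 : ℕ → ℝ := fun ν => (ν * M / (k * Y)) ^ (1 / (k - 1)) with ht0
  set t : ℕ → ℝ := fun ν => max τ1 (min τ2 (t0 ν)) with ht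
  have ht0N : ∀ ν ∈ N, τ1 ≤ t0 ν ∧ t0 ν ≤ τ2 ∧ k * Y * (t0 ν) ^ (k - 1) = ν * M ∧
      Y * (t0 ν) ^ k = ((ν : ℝ) / (C2 * Y0 / M)) ^ k' * D := by
    intro ν hν
    rw [hN, Nset, Finset.mem_filter, Finset.mem_range, Nat.lt_succ_iff] at hν
    have n1 : c1 * Y0 ≤ ν * M := (div_le_iff₀ hM).mp hν.2
    have n2 : ν * M ≤ C2 * Y0 := by
      have := (Nat.le_floor_iff (by positivity)).mp hν.1
      exact (le_div_iff₀ hM).mp this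
    have hν0 : 0 ≤ (ν:ℝ) * M := by positivity
    have hz0 : 0 ≤ ν * M / (k * Y) := by positivity
    have back : (t0 ν) ^ (k - 1) = ν * M / (k * Y) := by
      rw [ht0]; simp only
      rw [← Real.rpow_mul hz0, one_div_mul_cancel hk1.ne', Real.rpow_one]
    have ht0n : 0 ≤ t0 ν := Real.rpow_nonneg hz0 _
    have hαp := Real.rpow_pos_of_pos hα (k-1)
    have hβp := Real.rpow_pos_of_pos hβ (k-1)
    refine ⟨?_, ?_, ?_, ?_⟩
    · rw [← Real.rpow_le_rpow_iff hτposa.le ht0n hk1, back, p1, le_div_iff₀ (by positivity)]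
      rw [hc1] at n1
      have : α ^ (k-1) / 4 * (k * Y) ≤ α ^ (k-1) / 4 * (k * (2 * Y0)) := by gcongr
      linarith
    · rw [← Real.rpow_le_rpow_iff ht0n hτposb.le hk1, back, p2, div_le_iff₀ (by positivity)]
      rw [hC2] at n2
      have : β ^ (k-1) * 4 * (k * Y0) ≤ β ^ (k-1) * 4 * (k * Y) := by gcongr
      linarith
    · rw [back]; field_simp
    · have e1 : (t0 ν) ^ k = (ν * M / (k * Y)) ^ k' := by
        rw [ht0]; simp only
        rw [← Real.rpow_mul hz0]; congr 1; rw [hk']; field_simp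
      have e2 : (ν : ℝ) * M / (k * Y) = ((ν : ℝ) / (C2 * Y0 / M)) * ((C2 * Y0 / k)) * Y⁻¹ := by
        field_simp
      rw [e1, e2, Real.mul_rpow (by positivity) (by positivity), Real.mul_rpow (by positivity) (by positivity), hD,
        Real.rpow_sub hY, Real.rpow_one, Real.inv_rpow hY.le]
      field_simp
  have htN : ∀ ν ∈ N, t ν = t0 ν := by
    intro ν hν
    obtain ⟨h1, h2, _⟩ := ht0N ν hν
    simp only [ht]
    rw [min_eq_right h2, max_eq_right h1]
  have htmono : Monotone t := by
    intro i j hij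
    have : t0 i ≤ t0 j := by
      apply Real.rpow_le_rpow (by positivity) _ (by positivity)
      gcongr
    exact max_le_max le_rfl (min_le_min le_rfl this)
  have ht1 : ∀ n, τ1 ≤ t n := fun n => le_max_left _ _
  have ht2 : ∀ n, t n ≤ τ2 := fun n => max_le hτ12 (min_le_left _ _)
  have rep : ∀ ν ∈ N, In k M α β w Y ν = ∫ s in a..b, Phi k Y0 Y w w1 s (t ν) *
      e (((ν : ℝ) / (C2 * Y0 / M)) ^ k' * (g0 k s * D)) := by
    intro ν hν
    obtain ⟨h1, h2, h3, h4⟩ := ht0N ν hν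
    rw [htN ν hν]
    have hτ : 0 < t0 ν := hτposa.trans_le h1
    rw [in_rep B k (τ := t0 ν) (Y0 := Y0) ha hab hτ
      (by rw [haa, div_mul_eq_mul_div, div_le_iff₀ hτposb]; gcongr)
      (by rw [hbb, div_mul_eq_mul_div, le_div_iff₀ hτposa]; gcongr) hY0.le hY (by rw [h3]; simp), h4]
    congr 1; ext s; congr 2; ring
  rw [Finset.sum_congr rfl rep, ← intervalIntegral.integral_finsetSum]
  swap
  · intro ν hν
    apply ContinuousOn.intervalIntegrable
    rw [Set.uIcc_of_le hab]
    exact (contOn_Phi k B.c0 B.c1 hY0.le ha).mul (continuous_e.comp_continuousOn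
      (continuousOn_const.mul ((contOn_g0 k ha).mul continuousOn_const)))
  rw [← intervalIntegral.integral_const_mul]
  apply intervalIntegral.norm_integral_le_of_norm_le hab
  · filter_upwards with s hs
    have hs' : s ∈ Set.Icc a b := ⟨hs.1.le, hs.2⟩
    obtain ⟨L1, L2⟩ := HK Y0 Y hY0 hY1 s hs'
    set bb : ℕ → ℂ := fun ν => if c1 * Y0 / M ≤ ν then e (((ν : ℝ) / (C2 * Y0 / M)) ^ k' * (g0 k s * D)) else 0 with hbb
    have conv : ∀ F : ℕ → ℂ, ∑ ν ∈ N, F ν * e (((ν : ℝ) / (C2 * Y0 / M)) ^ k' * (g0 k s * D)) =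
        ∑ ν ∈ Finset.range R, F ν * bb ν := by
      intro F
      rw [hN, Nset, Finset.sum_filter]
      apply Finset.sum_congr rfl
      intro ν _
      simp only [hbb]
      split_ifs <;> simp
    have hχ := chi_pos k (s := s) hY0.le
    have G0 : 0 ≤ Gs R N (C2 * Y0 / M) k' (g0 k s * D) := by
      unfold Gs
      exact Finset.sum_nonneg fun r hr => mul_nonneg (om_nonneg (Finset.mem_range.mp hr)) (norm_nonneg _)
    have := abel_bound R bb (Phi k Y0 Y w w1 s) t τ1 τ2 (K * chi k Y0 s) (Gs R N (C2 * Y0 / M) k' (g0 k s * D))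
      G0 htmono ht1 ht2 (by positivity) L1 L2 (by
        intro V hV
        refine (prefix_bound R V hV bb).trans (le_of_eq ?_)
        unfold Gs
        apply Finset.sum_congr rfl
        intro r _
        rw [conv (fun ν => e (r * ν / R))])
    rw [conv (fun ν => Phi k Y0 Y w w1 s (t ν))]
    refine this.trans (le_of_eq ?_)
    ring
  · apply ContinuousOn.intervalIntegrable
    rw [Set.uIcc_of_le hab]
    exact continuousOn_const.mul ((contOn_chi k hY0.le ha).mul ((continuous_Gs R N _ k').comp_continuousOn
      ((contOn_g0 k ha).mul continuousOn_const)))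


def Claim (θ k : ℝ) : Prop := ∀ c : ℝ, 0 < c → c < 1 → ∃ C > 0, ∀ M : ℝ, 1 ≤ M →
  ∫ y in (0:ℝ)..(M ^ 2), ‖∑ m ∈ (Finset.range (⌊M⌋₊ + 1)).filter (fun m : ℕ => c * M ≤ m),
    e (((m : ℝ) / M) ^ k * y)‖ ^ 4 ≤ C * M ^ (4 + θ)

lemma tangent4 (x μ : ℝ) : μ ^ 4 + 4 * μ ^ 3 * (x - μ) ≤ x ^ 4 := by
  nlinarith [sq_nonneg (x ^ 2 - μ ^ 2), sq_nonneg (μ * (x - μ))]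

lemma finset_holder {ι : Type*} (A : Finset ι) (o H : ι → ℝ) (ho : ∀ a ∈ A, 0 ≤ o a) :
    (∑ a ∈ A, o a * H a) ^ 4 ≤ (∑ a ∈ A, o a) ^ 3 * ∑ a ∈ A, o a * H a ^ 4 := by
  set P := ∑ a ∈ A, o a with hP
  have hP0 : 0 ≤ P := Finset.sum_nonneg ho
  set T := ∑ a ∈ A, o a * H a with hT
  rcases hP0.eq_or_lt with h | h
  · have hz : ∀ a ∈ A, o a = 0 := (Finset.sum_eq_zero_iff_of_nonneg ho).mp h.symm
    have : T = 0 := Finset.sum_eq_zero fun a ha => by rw [hz a ha]; simp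
    rw [this, ← h]; simp
  have h1 : ∑ a ∈ A, o a * ((T / P) ^ 4 + 4 * (T / P) ^ 3 * (H a - T / P)) ≤ ∑ a ∈ A, o a * H a ^ 4 :=
    Finset.sum_le_sum fun a ha => mul_le_mul_of_nonneg_left (tangent4 _ _) (ho a ha)
  have h2 : ∑ a ∈ A, o a * ((T / P) ^ 4 + 4 * (T / P) ^ 3 * (H a - T / P)) = (T / P) ^ 4 * P := by
    have : ∀ a ∈ A, o a * ((T / P) ^ 4 + 4 * (T / P) ^ 3 * (H a - T / P)) =
      ((T / P) ^ 4 - 4 * (T / P) ^ 3 * (T / P)) * o a + 4 * (T / P) ^ 3 * (o a * H a) := fun a _ => by ring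
    rw [Finset.sum_congr rfl this, Finset.sum_add_distrib, ← Finset.mul_sum, ← Finset.mul_sum, ← hP, ← hT]
    field_simp
    ring
  rw [h2] at h1
  calc T ^ 4 = P ^ 3 * ((T / P) ^ 4 * P) := by field_simp
    _ ≤ _ := by gcongr

lemma integral_holder (a b : ℝ) (hab : a < b) (χ G : ℝ → ℝ) (hχ : ContinuousOn χ (Set.Icc a b))
    (hG : ContinuousOn G (Set.Icc a b)) (hpos : ∀ s ∈ Set.Icc a b, 0 < χ s) :
    (∫ s in a..b, χ s * G s) ^ 4 ≤ (∫ s in a..b, χ s) ^ 3 * ∫ s in a..b, χ s * G s ^ 4 := by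
  set P := ∫ s in a..b, χ s with hP
  set T := ∫ s in a..b, χ s * G s with hT
  have ii : ∀ f : ℝ → ℝ, ContinuousOn f (Set.Icc a b) → IntervalIntegrable f volume a b := by
    intro f hf
    apply ContinuousOn.intervalIntegrable
    rwa [Set.uIcc_of_le hab.le]
  have hP0 : 0 < P := intervalIntegral.intervalIntegral_pos_of_pos_on (ii _ hχ)
    (fun s hs => hpos s ⟨hs.1.le, hs.2.le⟩) hab
  have h1 : ∫ s in a..b, χ s * ((T / P) ^ 4 + 4 * (T / P) ^ 3 * (G s - T / P)) ≤ ∫ s in a..b, χ s * G s ^ 4 := by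
    apply intervalIntegral.integral_mono_on hab.le (ii _ (by fun_prop)) (ii _ (by fun_prop))
    intro s hs
    exact mul_le_mul_of_nonneg_left (tangent4 _ _) (hpos s hs).le
  have h2 : ∫ s in a..b, χ s * ((T / P) ^ 4 + 4 * (T / P) ^ 3 * (G s - T / P)) = (T / P) ^ 4 * P := by
    have : ∀ s, χ s * ((T / P) ^ 4 + 4 * (T / P) ^ 3 * (G s - T / P)) =
      ((T / P) ^ 4 - 4 * (T / P) ^ 3 * (T / P)) * χ s + 4 * (T / P) ^ 3 * (χ s * G s) := fun a => by ring
    simp_rw [this]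
    rw [intervalIntegral.integral_add (ii _ (by fun_prop)) (ii _ (by fun_prop)),
      intervalIntegral.integral_const_mul, intervalIntegral.integral_const_mul, ← hP, ← hT]
    field_simp
    ring
  rw [h2] at h1
  calc T ^ 4 = P ^ 3 * ((T / P) ^ 4 * P) := by field_simp
    _ ≤ _ := by gcongr

lemma moment_H (k θ c1 C2 κ G : ℝ) (hk : 1 < k) (hCl : Claim θ (k / (k - 1)))
    (hc1 : 0 < c1) (hcC : c1 < C2) (hκ : 0 < κ) (hG : 0 < G) :
    ∃ C > 0, ∀ Y0 M : ℝ, 1 ≤ Y0 → 1 ≤ M → Y0 ≤ M ^ 2 → 1 ≤ C2 * Y0 / M → ∀ ξ, -G ≤ ξ → ξ ≤ -κ →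
      ∀ cc : ℕ → ℂ, (∀ ν, ‖cc ν‖ ≤ 1) →
      ∫ Y in Y0..(2 * Y0), ‖∑ ν ∈ Nset c1 C2 Y0 M, cc ν * e (((ν : ℝ) / (C2 * Y0 / M)) ^ (k / (k - 1)) *
        (ξ * ((C2 * Y0 / k) ^ (k / (k - 1)) * Y ^ (1 - k / (k - 1)))))‖ ^ 4 ≤
        C * Y0 * (C2 * Y0 / M) ^ (2 + θ) := by
  have hk1 : 0 < k - 1 := by linarith
  have hC2 : 0 < C2 := by linarith
  set k' := k / (k - 1) with hk'
  have hk'1 : 0 < k' - 1 := by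
    rw [hk', sub_pos, one_lt_div hk1]; linarith
  obtain ⟨C, hC, HC⟩ := hCl (c1 / C2) (by positivity) ((div_lt_one hC2).mpr hcC)
  set κ1 := κ * (k' - 1) * (C2 / (2 * k)) ^ k' with hκ1
  have hκpos : 0 < κ1 := by
    have : 0 < (C2 / (2 * k)) ^ k' := Real.rpow_pos_of_pos (by positivity) _
    positivity
  set G' := G * (C2 / k) ^ k' with hG'
  have hG'p : 0 < G' := by
    have : 0 < (C2 / (k)) ^ k' := Real.rpow_pos_of_pos (by positivity) _
    positivity
  refine ⟨κ1⁻¹ * (8 * (G' + C2 ^ 2) * C), by positivity, ?_⟩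
  intro Y0 M hY0 hM hY0M hM' ξ hξ1 hξ2 cc hcc
  have hY0p : 0 < Y0 := by linarith
  have hMp : 0 < M := by linarith
  set M' := C2 * Y0 / M with hM'def
  have hM'p : 0 < M' := by linarith
  set N := Nset c1 C2 Y0 M with hN
  set D := (C2 * Y0 / k) ^ k' with hD
  have hDp : 0 < D := Real.rpow_pos_of_pos (by positivity) _
  set F : ℝ → ℝ := fun y => ‖∑ ν ∈ N, cc ν * e (((ν : ℝ) / M') ^ k' * y)‖ ^ 4 with hF
  have hFc : Continuous F := by rw [hF]; fun_prop
  set φ : ℝ → ℝ := fun Y => ξ * (D * Y ^ (1 - k')) with hφ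
  set φ' : ℝ → ℝ := fun Y => ξ * (D * ((1 - k') * Y ^ (-k'))) with hφ'
  have hle : Y0 ≤ 2 * Y0 := by linarith
  have hpos : ∀ Y ∈ Set.Icc Y0 (2 * Y0), 0 < Y := fun Y hY => hY0p.trans_le hY.1
  have hder : ∀ Y ∈ Set.Icc Y0 (2 * Y0), HasDerivAt φ (φ' Y) Y := by
    intro Y hY
    have := ((Real.hasDerivAt_rpow_const (x := Y) (p := 1 - k') (Or.inl (hpos Y hY).ne')).const_mul D).const_mul ξ
    refine this.congr_deriv ?_
    simp only [hφ']
    rw [show 1 - k' - 1 = -k' by ring]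
  have hφc : ContinuousOn φ (Set.Icc Y0 (2 * Y0)) := fun Y hY => (hder Y hY).continuousAt.continuousWithinAt
  have hφ'c : ContinuousOn φ' (Set.Icc Y0 (2 * Y0)) := by
    have := contOn_rpow (-k') (b := 2 * Y0) hY0p
    simp only [hφ']; fun_prop
  have hφ'l : ∀ Y ∈ Set.Icc Y0 (2 * Y0), κ1 ≤ φ' Y := by
    intro Y hY
    have h1 : (2 * Y0) ^ (-k') ≤ Y ^ (-k') := Real.rpow_le_rpow_of_nonpos (hpos Y hY) hY.2 (by linarith)
    have h2 : D * (2 * Y0) ^ (-k') = (C2 / (2 * k)) ^ k' := by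
      rw [hD, Real.rpow_neg (by positivity), ← div_eq_mul_inv, ← Real.div_rpow (by positivity) (by positivity)]
      congr 1; field_simp
    have h3 : φ' Y = (-ξ) * (k' - 1) * (D * Y ^ (-k')) := by simp only [hφ']; ring
    rw [h3, hκ1, ← h2]
    have : 0 < (2 * Y0) ^ (-k') := Real.rpow_pos_of_pos (by positivity) _
    have : κ ≤ -ξ := by linarith
    gcongr
    exact mul_nonneg (by linarith) hk'1.le
  have hsub := intervalIntegral.integral_comp_mul_deriv' (a := Y0) (b := 2 * Y0) (f := φ) (f' := φ') (g := F)
    (by rwa [Set.uIcc_of_le hle]) (by rwa [Set.uIcc_of_le hle]) hFc.continuousOn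
  have hstep : ∫ Y in Y0..(2 * Y0), F (φ Y) ≤ κ1⁻¹ * ∫ Y in Y0..(2 * Y0), (F ∘ φ) Y * φ' Y := by
    rw [← intervalIntegral.integral_const_mul]
    apply intervalIntegral.integral_mono_on hle
    · apply ContinuousOn.intervalIntegrable
      rw [Set.uIcc_of_le hle]
      exact hFc.comp_continuousOn hφc
    · apply ContinuousOn.intervalIntegrable
      rw [Set.uIcc_of_le hle]
      exact continuousOn_const.mul ((hFc.comp_continuousOn hφc).mul hφ'c)
    · intro Y hY
      have h1 := hφ'l Y hY
      have h0 : 0 ≤ F (φ Y) := by simp only [hF]; positivity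
      rw [inv_mul_eq_div, le_div_iff₀ hκpos]
      exact mul_le_mul_of_nonneg_left h1 h0
  have hle2 : φ Y0 ≤ φ (2 * Y0) := by
    simp only [hφ]
    have : (2 * Y0) ^ (1 - k') ≤ Y0 ^ (1 - k') := Real.rpow_le_rpow_of_nonpos hY0p hle (by linarith)
    have : D * (2 * Y0) ^ (1 - k') ≤ D * Y0 ^ (1 - k') := by gcongr
    nlinarith
  have hlen : φ (2 * Y0) - φ Y0 ≤ G' * Y0 := by
    have h1 : φ (2 * Y0) ≤ 0 := by
      simp only [hφ]
      have : 0 < D * (2 * Y0) ^ (1 - k') := mul_pos hDp (Real.rpow_pos_of_pos (by positivity) _)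
      nlinarith
    have h2 : D * Y0 ^ (1 - k') = (C2 / k) ^ k' * Y0 := by
      rw [hD, Real.rpow_sub hY0p, Real.rpow_one, mul_div_assoc', mul_comm _ Y0, mul_div_assoc,
        ← Real.div_rpow (by positivity) (by positivity), mul_comm]
      congr 2; field_simp
    have h3 : -φ Y0 ≤ G' * Y0 := by
      simp only [hφ]
      rw [h2, hG']
      have : 0 < (C2 / k) ^ k' * Y0 := mul_pos (Real.rpow_pos_of_pos (by positivity) _) hY0p
      nlinarith
    linarith
  have hmaj := majorant N (fun ν => ((ν:ℝ) / M') ^ k') cc (fun _ => 1) (fun ν _ => hcc ν) (φ Y0) (φ (2 * Y0)) (M' ^ 2)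
    (by positivity) hle2
  have hclaim := HC M' hM'
  have hNeq : (Finset.range (⌊M'⌋₊ + 1)).filter (fun m : ℕ => c1 / C2 * M' ≤ m) = N := by
    rw [hN, Nset]
    have : c1 / C2 * M' = c1 * Y0 / M := by rw [hM'def]; field_simp
    rw [this]
  rw [hNeq] at hclaim
  simp only [Complex.ofReal_one, one_mul] at hmaj
  rw [hsub] at hstep
  have hM'pow : M' ^ (4 + θ) = M' ^ 2 * M' ^ (2 + θ) := by
    rw [← Real.rpow_natCast, ← Real.rpow_add hM'p]; congr 1; push_cast; ring
  have hM'2 : M' ^ 2 ≤ C2 ^ 2 * Y0 := by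
    rw [hM'def, div_pow, div_le_iff₀ (by positivity), mul_pow]
    have : 0 ≤ C2 ^ 2 * Y0 := by positivity
    nlinarith
  have hp : 0 < M' ^ (2 + θ) := Real.rpow_pos_of_pos hM'p _
  calc _ = ∫ Y in Y0..(2 * Y0), F (φ Y) := rfl
    _ ≤ _ := hstep
    _ ≤ κ1⁻¹ * (8 * ((φ (2 * Y0) - φ Y0) / M' ^ 2 + 1) * (C * M' ^ (4 + θ))) := by
      gcongr
      refine hmaj.trans ?_
      have : 0 ≤ (φ (2 * Y0) - φ Y0) / M' ^ 2 := div_nonneg (by linarith) (by positivity)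
      gcongr
    _ = κ1⁻¹ * (8 * ((φ (2 * Y0) - φ Y0) + M' ^ 2) * (C * M' ^ (2 + θ))) := by
      rw [hM'pow]; field_simp
    _ ≤ κ1⁻¹ * (8 * (G' * Y0 + C2 ^ 2 * Y0) * (C * M' ^ (2 + θ))) := by gcongr
    _ = _ := by ring

lemma moment_G (k θ c1 C2 κ G : ℝ) (hk : 1 < k) (hCl : Claim θ (k / (k - 1)))
    (hc1 : 0 < c1) (hcC : c1 < C2) (hκ : 0 < κ) (hG : 0 < G) :
    ∃ C > 0, ∀ Y0 M : ℝ, 1 ≤ Y0 → 1 ≤ M → Y0 ≤ M ^ 2 → 1 ≤ C2 * Y0 / M → ∀ ξ, -G ≤ ξ → ξ ≤ -κ →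
      ∀ R : ℕ, ∫ Y in Y0..(2 * Y0), (Gs R (Nset c1 C2 Y0 M) (C2 * Y0 / M) (k / (k - 1))
        (ξ * ((C2 * Y0 / k) ^ (k / (k - 1)) * Y ^ (1 - k / (k - 1))))) ^ 4 ≤
        (2 + Real.log R) ^ 4 * (C * Y0 * (C2 * Y0 / M) ^ (2 + θ)) := by
  obtain ⟨C, hC, H⟩ := moment_H k θ c1 C2 κ G hk hCl hc1 hcC hκ hG
  refine ⟨C, hC, ?_⟩
  intro Y0 M hY0 hM hY0M hM' ξ hξ1 hξ2 R
  have hle : Y0 ≤ 2 * Y0 := by linarith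
  have hY0p : 0 < Y0 := by linarith
  set L := ∑ r ∈ Finset.range R, om R r with hL
  have hL0 : 0 ≤ L := Finset.sum_nonneg fun r hr => om_nonneg (Finset.mem_range.mp hr)
  have hLR : L ≤ 2 + Real.log R := om_sum R
  have hc : ContinuousOn (fun Y : ℝ => ξ * ((C2 * Y0 / k) ^ (k / (k - 1)) * Y ^ (1 - k / (k - 1)))) (Set.Icc Y0 (2 * Y0)) := by
    have := contOn_rpow (1 - k / (k-1)) (b := 2 * Y0) hY0p
    fun_prop
  set E := C * Y0 * (C2 * Y0 / M) ^ (2 + θ) with hE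
  have hE0 : 0 ≤ E := by
    have : 0 ≤ (C2 * Y0 / M) ^ (2 + θ) := Real.rpow_nonneg (by linarith) _
    positivity
  set Hr : ℕ → ℝ → ℝ := fun r Y => ‖∑ ν ∈ Nset c1 C2 Y0 M, e (r * ν / R) * e (((ν : ℝ) / (C2 * Y0 / M)) ^ (k / (k - 1)) *
        (ξ * ((C2 * Y0 / k) ^ (k / (k - 1)) * Y ^ (1 - k / (k - 1)))))‖ with hHr
  have hHc : ∀ r, ContinuousOn (Hr r) (Set.Icc Y0 (2 * Y0)) := by
    intro r
    have : Continuous (fun y => ‖∑ ν ∈ Nset c1 C2 Y0 M, e (r * ν / R) * e (((ν : ℝ) / (C2 * Y0 / M)) ^ (k / (k - 1)) * y)‖) := by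
      fun_prop
    exact this.comp_continuousOn hc
  calc _ ≤ ∫ Y in Y0..(2 * Y0), L ^ 3 * ∑ r ∈ Finset.range R, om R r * Hr r Y ^ 4 := by
        apply intervalIntegral.integral_mono_on hle
        · apply ContinuousOn.intervalIntegrable
          rw [Set.uIcc_of_le hle]
          exact ((continuous_Gs R _ _ _).comp_continuousOn hc).pow 4
        · apply ContinuousOn.intervalIntegrable
          rw [Set.uIcc_of_le hle]
          fun_prop
        · intro Y hY
          exact finset_holder _ _ _ fun r hr => om_nonneg (Finset.mem_range.mp hr)
    _ = L ^ 3 * ∑ r ∈ Finset.range R, om R r * ∫ Y in Y0..(2 * Y0), Hr r Y ^ 4 := by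
        rw [intervalIntegral.integral_const_mul, intervalIntegral.integral_finsetSum]
        · simp_rw [intervalIntegral.integral_const_mul]
        · intro r _
          apply ContinuousOn.intervalIntegrable
          rw [Set.uIcc_of_le hle]
          have := hHc r
          fun_prop
    _ ≤ L ^ 3 * ∑ r ∈ Finset.range R, om R r * E := by
        gcongr with r hr
        · exact om_nonneg (Finset.mem_range.mp hr)
        · exact H Y0 M hY0 hM hY0M hM' ξ hξ1 hξ2 _ fun ν => by rw [norm_e]
    _ = L ^ 4 * E := by rw [← Finset.sum_mul]; ring
    _ ≤ _ := by gcongr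


lemma g1_lower (k a b : ℝ) (hk : 1 < k) (ha : 0 < a) (ha1 : a < 1) (hb1 : 1 < b) :
    ∃ κ > 0, ∀ s ∈ Set.Icc a b, κ * |s - 1| ≤ |g1 k s| := by
  have hcont : ContinuousOn (fun s : ℝ => k * (k - 1) * s ^ (k - 2)) (Set.Icc a b) :=
    continuousOn_const.mul (contOn_rpow (k-2) ha)
  obtain ⟨s0, hs0, hmin⟩ := isCompact_Icc.exists_isMinOn (Set.nonempty_Icc.mpr (by linarith : a ≤ b)) hcont
  have hk1 : 0 < k - 1 := by linarith
  have h0 : 0 < k * (k - 1) * s0 ^ (k - 2) := by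
    have := Real.rpow_pos_of_pos (ha.trans_le hs0.1) (k-2)
    positivity
  set κ := k * (k - 1) * s0 ^ (k - 2) with hκ
  have key := Convex.mul_sub_le_image_sub_of_le_deriv (convex_Icc a b) (f := g1 k) (contOn_g1 k ha)
    (fun s hs => by
      rw [interior_Icc] at hs
      exact (hasDerivAt_g1 k (ha.trans hs.1)).differentiableAt.differentiableWithinAt) (C := κ)
    (fun s hs => by
      rw [interior_Icc] at hs
      rw [(hasDerivAt_g1 k (ha.trans hs.1)).deriv]
      exact hmin ⟨hs.1.le, hs.2.le⟩)
  have h1 : g1 k 1 = 0 := by simp [g1]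
  refine ⟨κ, h0, ?_⟩
  intro s hs
  have hm : (1:ℝ) ∈ Set.Icc a b := ⟨ha1.le, hb1.le⟩
  rcases le_total s 1 with h | h
  · have := key s hs 1 hm h
    rw [h1] at this
    rw [abs_of_nonpos (by linarith : s - 1 ≤ 0)]
    have := neg_le_abs (g1 k s)
    linarith
  · have := key 1 hm s hs h
    rw [h1] at this
    rw [abs_of_nonneg (by linarith : 0 ≤ s - 1)]
    have := le_abs_self (g1 k s)
    linarith

lemma g0_near (k a b : ℝ) (hk : 1 < k) (ha : 0 < a) (ha1 : a < 1) (hb1 : 1 < b) :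
    ∃ c0 κ G : ℝ, 0 < c0 ∧ 0 < κ ∧ 0 < G ∧ a ≤ 1 - c0 ∧ 1 + c0 ≤ b ∧
      ∀ s ∈ Set.Icc (1 - c0) (1 + c0), -G ≤ g0 k s ∧ g0 k s ≤ -κ := by
  have h1 : g0 k 1 = -(k - 1) := by simp [g0]
  have hc : ContinuousAt (g0 k) 1 := (hasDerivAt_g0 k one_pos).continuousAt
  obtain ⟨δ, hδ, H⟩ := Metric.continuousAt_iff.mp hc ((k - 1) / 2) (by linarith)
  refine ⟨min (δ / 2) (min (1 - a) (b - 1)), (k - 1) / 2, 2 * (k - 1), ?_, by linarith, by linarith, ?_, ?_, ?_⟩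
  · have : 0 < 1 - a := by linarith
    have : 0 < b - 1 := by linarith
    positivity
  · linarith [(min_le_right (δ/2) (min (1 - a) (b - 1))).trans (min_le_left _ _)]
  · linarith [(min_le_right (δ/2) (min (1 - a) (b - 1))).trans (min_le_right _ _)]
  · intro s hs
    have hm := min_le_left (δ/2) (min (1 - a) (b - 1))
    have : dist s 1 < δ := by
      rw [Real.dist_eq, abs_lt]
      constructor <;> linarith [hs.1, hs.2]
    have := H this
    rw [Real.dist_eq, h1, abs_lt] at this
    constructor <;> linarith [this.1, this.2]

lemma chi_int (k a b κ c0 : ℝ) (hκ : 0 < κ) (ha : 0 < a) (hc0 : 0 < c0) (h1 : a ≤ 1 - c0) (h2 : 1 + c0 ≤ b)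
    (H : ∀ s ∈ Set.Icc a b, κ * |s - 1| ≤ |g1 k s|) (Y0 : ℝ) (hY0 : 0 < Y0) :
    ∫ s in (1 - c0)..(1 + c0), chi k Y0 s ≤ π / κ / Real.sqrt Y0 := by
  have hle : 1 - c0 ≤ 1 + c0 := by linarith
  have hs : 0 < Real.sqrt Y0 := Real.sqrt_pos.mpr hY0
  set c := κ * Real.sqrt Y0 with hc
  have hcp : 0 < c := by positivity
  have hcont : Continuous fun s : ℝ => 1 / (1 + (c * s - c) ^ 2) := by
    refine Continuous.div continuous_const (by fun_prop) fun s => by positivity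
  calc ∫ s in (1 - c0)..(1 + c0), chi k Y0 s ≤ ∫ s in (1 - c0)..(1 + c0), 1 / (1 + (c * s - c) ^ 2) := by
        apply intervalIntegral.integral_mono_on hle
        · apply ContinuousOn.intervalIntegrable
          rw [Set.uIcc_of_le hle]
          exact contOn_chi k hY0.le (by linarith)
        · exact hcont.intervalIntegrable _ _
        · intro s hs'
          have := H s ⟨h1.trans hs'.1, hs'.2.trans h2⟩
          unfold chi
          apply one_div_le_one_div_of_le (by positivity)
          have h3 : (κ * |s - 1|) ^ 2 ≤ g1 k s ^ 2 := by
            rw [← sq_abs (g1 k s)]; gcongr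
          rw [mul_pow, sq_abs] at h3
          have h4 : (c * s - c) ^ 2 = Y0 * (κ ^ 2 * (s - 1) ^ 2) := by
            rw [hc]
            have : Real.sqrt Y0 ^ 2 = Y0 := Real.sq_sqrt hY0.le
            calc _ = Real.sqrt Y0 ^ 2 * (κ ^ 2 * (s - 1) ^ 2) := by ring
              _ = _ := by rw [this]
          rw [h4]
          gcongr
    _ = c⁻¹ * (arctan (c * (1 + c0) - c) - arctan (c * (1 - c0) - c)) := by
        rw [intervalIntegral.integral_comp_mul_sub (fun x : ℝ => 1 / (1 + x ^ 2)) hcp.ne', integral_one_div_one_add_sq, smul_eq_mul]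
    _ ≤ c⁻¹ * π := by
        gcongr
        linarith [arctan_lt_pi_div_two (c * (1 + c0) - c), neg_pi_div_two_lt_arctan (c * (1 - c0) - c)]
    _ = _ := by rw [hc]; field_simp

lemma Gs_nonneg (R : ℕ) (N : Finset ℕ) (M' k' y : ℝ) : 0 ≤ Gs R N M' k' y :=
  Finset.sum_nonneg fun r hr => mul_nonneg (om_nonneg (Finset.mem_range.mp hr)) (norm_nonneg _)

lemma Gs_triv (R : ℕ) (N : Finset ℕ) (M' k' y : ℝ) : Gs R N M' k' y ≤ (2 + Real.log R) * N.card := by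
  unfold Gs
  calc _ ≤ ∑ r ∈ Finset.range R, om R r * (N.card : ℝ) := by
        gcongr with r hr
        · exact om_nonneg (Finset.mem_range.mp hr)
        · refine (norm_sum_le _ _).trans ?_
          simp [norm_e]
    _ = (∑ r ∈ Finset.range R, om R r) * N.card := by rw [Finset.sum_mul]
    _ ≤ _ := by gcongr; exact om_sum R

lemma param_cont (p q a b : ℝ) (hpq : p ≤ q) (hab : a ≤ b) (H : ℝ → ℝ → ℝ)
    (hH : ContinuousOn (fun z : ℝ × ℝ => H z.1 z.2) (Set.Icc p q ×ˢ Set.Icc a b)) :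
    ContinuousOn (fun Y => ∫ s in a..b, H Y s) (Set.Icc p q) := by
  have h1 : Continuous (Function.uncurry fun Y s => H (max p (min Y q)) (max a (min s b))) := by
    refine hH.comp_continuous (f := fun z : ℝ × ℝ => (max p (min z.1 q), max a (min z.2 b))) (by fun_prop) ?_
    intro z
    exact ⟨⟨le_max_left _ _, max_le hpq (min_le_right _ _)⟩, ⟨le_max_left _ _, max_le hab (min_le_right _ _)⟩⟩
  have h2 := intervalIntegral.continuous_parametric_intervalIntegral_of_continuous' (μ := volume) h1 a b
  refine h2.continuousOn.congr ?_
  intro Y hY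
  apply intervalIntegral.integral_congr
  intro s hs
  rw [Set.uIcc_of_le hab] at hs
  simp only
  rw [min_eq_left hY.2, max_eq_right hY.1, min_eq_left hs.2, max_eq_right hs.1]

lemma near_moment (k θ c1 C2 c0 κ G Cp : ℝ) (hk : 1 < k) (hCl : Claim θ (k / (k - 1)))
    (hc1 : 0 < c1) (hcC : c1 < C2) (hκ : 0 < κ) (hG : 0 < G) (hc0 : 0 < c0) (hc01 : 0 < 1 - c0) (hCp : 0 < Cp)
    (hg : ∀ s ∈ Set.Icc (1 - c0) (1 + c0), -G ≤ g0 k s ∧ g0 k s ≤ -κ)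
    (hχ : ∀ Y0 : ℝ, 0 < Y0 → ∫ s in (1 - c0)..(1 + c0), chi k Y0 s ≤ Cp / Real.sqrt Y0) :
    ∃ C > 0, ∀ Y0 M : ℝ, 1 ≤ Y0 → 1 ≤ M → Y0 ≤ M ^ 2 → 1 ≤ C2 * Y0 / M → ∀ R : ℕ,
      ∫ Y in Y0..(2 * Y0), (∫ s in (1 - c0)..(1 + c0), chi k Y0 s * Gs R (Nset c1 C2 Y0 M) (C2 * Y0 / M) (k / (k - 1))
        (g0 k s * ((C2 * Y0 / k) ^ (k / (k - 1)) * Y ^ (1 - k / (k - 1))))) ^ 4 ≤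
        (2 + Real.log R) ^ 4 * (C * Y0 * (C2 * Y0 / M) ^ (2 + θ)) / Y0 ^ 2 := by
  obtain ⟨C, hC, H⟩ := moment_G k θ c1 C2 κ G hk hCl hc1 hcC hκ hG
  refine ⟨Cp ^ 4 * C, by positivity, ?_⟩
  intro Y0 M hY0 hM hY0M hM' R
  have hle : Y0 ≤ 2 * Y0 := by linarith
  have hY0p : 0 < Y0 := by linarith
  have hles : 1 - c0 < 1 + c0 := by linarith
  set E := (2 + Real.log R) ^ 4 * (C * Y0 * (C2 * Y0 / M) ^ (2 + θ)) with hE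
  have hE0 : 0 ≤ E := by
    have : 0 ≤ (C2 * Y0 / M) ^ (2 + θ) := Real.rpow_nonneg (by linarith) _
    positivity
  set P := ∫ s in (1 - c0)..(1 + c0), chi k Y0 s with hP
  have hχc : ContinuousOn (chi k Y0) (Set.Icc (1 - c0) (1 + c0)) := contOn_chi k hY0p.le hc01
  have hP0 : 0 ≤ P := intervalIntegral.integral_nonneg hles.le fun s _ => (chi_pos k hY0p.le).le
  have hPle := hχ Y0 hY0p
  rw [← hP] at hPle
  set F : ℝ → ℝ → ℝ := fun Y s => Gs R (Nset c1 C2 Y0 M) (C2 * Y0 / M) (k / (k - 1))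
        (g0 k s * ((C2 * Y0 / k) ^ (k / (k - 1)) * Y ^ (1 - k / (k - 1)))) with hF
  have hpair : ContinuousOn (fun p : ℝ × ℝ => F p.1 p.2) (Set.Icc Y0 (2 * Y0) ×ˢ Set.Icc (1 - c0) (1 + c0)) := by
    simp only [hF]
    apply (continuous_Gs R _ _ _).comp_continuousOn
    have h1 : ContinuousOn (fun p : ℝ × ℝ => g0 k p.2) (Set.Icc Y0 (2 * Y0) ×ˢ Set.Icc (1 - c0) (1 + c0)) :=
      (contOn_g0 k (b := 1 + c0) hc01).comp continuousOn_snd fun p hp => hp.2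
    have h2 : ContinuousOn (fun p : ℝ × ℝ => p.1 ^ (1 - k / (k-1))) (Set.Icc Y0 (2 * Y0) ×ˢ Set.Icc (1 - c0) (1 + c0)) :=
      (contOn_rpow (1 - k / (k-1)) (b := 2 * Y0) hY0p).comp continuousOn_fst fun p hp => hp.1
    fun_prop
  have hχpair : ContinuousOn (fun p : ℝ × ℝ => chi k Y0 p.2) (Set.Icc Y0 (2 * Y0) ×ˢ Set.Icc (1 - c0) (1 + c0)) :=
    hχc.comp continuousOn_snd fun p hp => hp.2
  have hFs : ∀ Y ∈ Set.Icc Y0 (2 * Y0), ContinuousOn (F Y) (Set.Icc (1 - c0) (1 + c0)) := by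
    intro Y hY
    exact hpair.comp (f := fun s => (Y, s)) (by fun_prop) fun s hs => ⟨hY, hs⟩
  have hFY : ∀ s ∈ Set.Icc (1 - c0) (1 + c0), ContinuousOn (fun Y => F Y s) (Set.Icc Y0 (2 * Y0)) := by
    intro s hs
    exact hpair.comp (f := fun Y => (Y, s)) (by fun_prop) fun Y hY => ⟨hY, hs⟩
  have hprodA : IntegrableOn (fun p : ℝ × ℝ => chi k Y0 p.2 * F p.1 p.2 ^ 4)
      (Set.Icc Y0 (2 * Y0) ×ˢ Set.Icc (1 - c0) (1 + c0)) (volume.prod volume) := by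
    apply ContinuousOn.integrableOn_compact (isCompact_Icc.prod isCompact_Icc)
    exact hχpair.mul (hpair.pow 4)
  have hprodB : Integrable (fun p : ℝ × ℝ => chi k Y0 p.2 * F p.1 p.2 ^ 4)
      ((volume.restrict (Set.Ioc Y0 (2 * Y0))).prod (volume.restrict (Set.Ioc (1 - c0) (1 + c0)))) := by
    rw [Measure.prod_restrict]
    exact hprodA.mono_set (Set.prod_mono Set.Ioc_subset_Icc_self Set.Ioc_subset_Icc_self)
  have hswap : ∫ Y in Y0..(2 * Y0), ∫ s in (1 - c0)..(1 + c0), chi k Y0 s * F Y s ^ 4 =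
      ∫ s in (1 - c0)..(1 + c0), ∫ Y in Y0..(2 * Y0), chi k Y0 s * F Y s ^ 4 := by
    simp_rw [intervalIntegral.integral_of_le hle, intervalIntegral.integral_of_le hles.le]
    exact integral_integral_swap hprodB
  have hI2 : IntervalIntegrable (fun Y => ∫ s in (1 - c0)..(1 + c0), chi k Y0 s * F Y s ^ 4) volume Y0 (2 * Y0) := by
    rw [intervalIntegrable_iff_integrableOn_Ioc_of_le hle]
    simp_rw [intervalIntegral.integral_of_le hles.le]
    exact hprodB.integral_prod_left
  have hI3 : IntervalIntegrable (fun s => ∫ Y in Y0..(2 * Y0), chi k Y0 s * F Y s ^ 4) volume (1 - c0) (1 + c0) := by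
    rw [intervalIntegrable_iff_integrableOn_Ioc_of_le hles.le]
    simp_rw [intervalIntegral.integral_of_le hle]
    exact hprodB.integral_prod_right
  have hI4 : ContinuousOn (fun Y => ∫ s in (1 - c0)..(1 + c0), chi k Y0 s * F Y s) (Set.Icc Y0 (2 * Y0)) := by
    exact param_cont _ _ _ _ hle hles.le _ (hχpair.mul hpair)
  have hI1 : IntervalIntegrable (fun Y => (∫ s in (1 - c0)..(1 + c0), chi k Y0 s * F Y s) ^ 4) volume Y0 (2 * Y0) := by
    apply ContinuousOn.intervalIntegrable
    rw [Set.uIcc_of_le hle]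
    exact hI4.pow 4
  calc _ ≤ ∫ Y in Y0..(2 * Y0), P ^ 3 * ∫ s in (1 - c0)..(1 + c0), chi k Y0 s * F Y s ^ 4 := by
        apply intervalIntegral.integral_mono_on hle hI1 (hI2.const_mul _)
        intro Y hY
        exact integral_holder _ _ hles _ _ hχc (hFs Y hY) fun s _ => chi_pos k hY0p.le
    _ = P ^ 3 * ∫ s in (1 - c0)..(1 + c0), ∫ Y in Y0..(2 * Y0), chi k Y0 s * F Y s ^ 4 := by
        rw [intervalIntegral.integral_const_mul, hswap]
    _ ≤ P ^ 3 * ∫ s in (1 - c0)..(1 + c0), chi k Y0 s * E := by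
        gcongr
        apply intervalIntegral.integral_mono_on hles.le hI3
        · apply ContinuousOn.intervalIntegrable
          rw [Set.uIcc_of_le hles.le]
          fun_prop
        · intro s hs
          rw [intervalIntegral.integral_const_mul]
          gcongr
          · exact (chi_pos k hY0p.le).le
          · exact H Y0 M hY0 hM hY0M hM' _ (hg s hs).1 (hg s hs).2 R
    _ = P ^ 4 * E := by rw [intervalIntegral.integral_mul_const, ← hP]; ring
    _ ≤ (Cp / Real.sqrt Y0) ^ 4 * E := by gcongr
    _ = Cp ^ 4 * E / Y0 ^ 2 := by
        rw [div_pow, show Real.sqrt Y0 ^ 4 = (Real.sqrt Y0 ^ 2) ^ 2 by ring, Real.sq_sqrt hY0p.le]; ring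
    _ = _ := by rw [hE]; ring


lemma far_bound (k κ c0 Y0 L p q : ℝ) (hκ : 0 < κ) (hc0 : 0 < c0) (hY0 : 0 < Y0) (hp : 0 < p) (hpq : p ≤ q)
    (H : ∀ s ∈ Set.Icc p q, κ * |s - 1| ≤ |g1 k s|) (hs : ∀ s ∈ Set.Icc p q, c0 ≤ |s - 1|)
    (G : ℝ → ℝ) (hGc : ContinuousOn G (Set.Icc p q)) (hG0 : ∀ s, 0 ≤ G s) (hGL : ∀ s, G s ≤ L) :
    ∫ s in p..q, chi k Y0 s * G s ≤ (q - p) * (L / (Y0 * (κ * c0) ^ 2)) := by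
  calc ∫ s in p..q, chi k Y0 s * G s ≤ ∫ s in p..q, L / (Y0 * (κ * c0) ^ 2) := by
        apply intervalIntegral.integral_mono_on hpq
        · apply ContinuousOn.intervalIntegrable
          rw [Set.uIcc_of_le hpq]
          exact (contOn_chi k hY0.le hp).mul hGc
        · exact intervalIntegrable_const
        · intro s hs'
          have h1 : κ * c0 ≤ |g1 k s| := (mul_le_mul_of_nonneg_left (hs s hs') hκ.le).trans (H s hs')
          have h2 : (κ * c0) ^ 2 ≤ g1 k s ^ 2 := by
            rw [← sq_abs (g1 k s)]; gcongr
          have h3 : chi k Y0 s ≤ 1 / (Y0 * (κ * c0) ^ 2) := by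
            unfold chi
            apply one_div_le_one_div_of_le (by positivity)
            nlinarith
          calc chi k Y0 s * G s ≤ 1 / (Y0 * (κ * c0) ^ 2) * L :=
                mul_le_mul h3 (hGL s) (hG0 s) (by positivity)
            _ = _ := by ring
    _ = _ := by rw [intervalIntegral.integral_const, smul_eq_mul]

lemma pow4_three (x y z : ℝ) : (x + y + z) ^ 4 ≤ 27 * (x ^ 4 + y ^ 4 + z ^ 4) := by
  have h1 : (x + y + z) ^ 2 ≤ 3 * (x ^ 2 + y ^ 2 + z ^ 2) := by
    nlinarith [sq_nonneg (x - y), sq_nonneg (y - z), sq_nonneg (x - z)]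
  have h2 : (x ^ 2 + y ^ 2 + z ^ 2) ^ 2 ≤ 3 * (x ^ 4 + y ^ 4 + z ^ 4) := by
    nlinarith [sq_nonneg (x ^ 2 - y ^ 2), sq_nonneg (y ^ 2 - z ^ 2), sq_nonneg (x ^ 2 - z ^ 2)]
  have h3 : ((x + y + z) ^ 2) ^ 2 ≤ (3 * (x ^ 2 + y ^ 2 + z ^ 2)) ^ 2 := by gcongr
  nlinarith

lemma continuous_Sw (k M β : ℝ) (w : ℝ → ℝ) : Continuous (Sw k M β w) := by
  unfold Sw
  have := continuous_e
  fun_prop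

set_option maxHeartbeats 2000000 in
lemma dyadic {α β : ℝ} {w w1 w2 : ℝ → ℝ} {W : ℝ} (B : Bump α β w w1 w2 W) (k θ : ℝ) (hk : 1 < k)
    (hCl : Claim θ (k / (k - 1))) :
    ∃ C > 0, ∀ M Y0 : ℝ, 1 ≤ M → 1 ≤ Y0 → Y0 ≤ M ^ 2 → ∀ l, 2 + Real.log (4 * k * β ^ (k - 1) * M + 1) ≤ l →
      ∫ Y in Y0..(2 * Y0), ‖Sw k M β w Y‖ ^ 4 ≤ C * l ^ 4 * (M ^ 4 + M ^ 2 * Y0 * (Y0 / M) ^ θ) := by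
  obtain ⟨Ce, hCe, hsw⟩ := sw_approx B k hk
  obtain ⟨a, b, K, ha, ha1, hb1, hK, hst⟩ := stat_bound B k hk
  set c1 := k * α ^ (k - 1) / 2 with hc1
  set C2 := 4 * k * β ^ (k - 1) with hC2
  have hst := hst c1 C2 rfl rfl
  have hβ : 0 < β := B.hα.trans B.hαβ
  have hc1p : 0 < c1 := by have := Real.rpow_pos_of_pos B.hα (k-1); positivity
  have hC2p : 0 < C2 := by have := Real.rpow_pos_of_pos hβ (k-1); positivity
  have hcC : c1 < C2 := by
    have h1 : α ^ (k-1) < β ^ (k-1) := Real.rpow_lt_rpow B.hα.le B.hαβ (by linarith)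
    have := Real.rpow_pos_of_pos B.hα (k-1)
    rw [hc1, hC2]; nlinarith
  obtain ⟨κ, hκ, hg1⟩ := g1_lower k a b hk ha ha1 hb1
  obtain ⟨c0, κ', G, hc0, hκ', hG, hac, hcb, hg0⟩ := g0_near k a b hk ha ha1 hb1
  obtain ⟨Cn, hCn, hnear⟩ := near_moment k θ c1 C2 c0 κ' G (π / κ) hk hCl hc1p hcC hκ' hG hc0 (by linarith)
    (by positivity) hg0 (fun Y0 hY0 => chi_int k a b κ c0 hκ ha hc0 hac hcb hg1 Y0 hY0)
  set A := K * (b - a) * (2 * C2) / (κ * c0) ^ 2 with hA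
  have hAp : 0 < A := by
    have : 0 < b - a := by linarith
    positivity
  refine ⟨27 * (16 * Ce ^ 4 + A ^ 4) + 27 * K ^ 4 * Cn * C2 ^ (2 + θ), by positivity, ?_⟩
  intro M Y0 hM hY0 hYM l hl
  have hMp : 0 < M := by linarith
  have hY0p : 0 < Y0 := by linarith
  have hle : Y0 ≤ 2 * Y0 := by linarith
  have hles : 1 - c0 ≤ 1 + c0 := by linarith
  set R := ⌊C2 * Y0 / M⌋₊ + 1 with hR
  have hM'p : 0 < C2 * Y0 / M := by positivity
  have hRle : (R : ℝ) ≤ C2 * M + 1 := by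
    rw [hR]; push_cast
    have h1 := Nat.floor_le hM'p.le
    have h2 : C2 * Y0 / M ≤ C2 * M := by
      rw [div_le_iff₀ hMp]; nlinarith
    linarith
  have hR1 : (1:ℝ) ≤ R := by rw [hR]; push_cast; linarith [Nat.cast_nonneg (α := ℝ) ⌊C2 * Y0 / M⌋₊]
  have hlogR : 2 + Real.log R ≤ l := by
    have := Real.log_le_log (by linarith) hRle
    linarith
  have hlogR0 : 0 ≤ Real.log R := Real.log_nonneg hR1
  have hl2 : 2 ≤ l := by linarith
  set N := Nset c1 C2 Y0 M with hN
  set F : ℝ → ℝ → ℝ := fun Y s => chi k Y0 s * Gs R N (C2 * Y0 / M) (k / (k - 1))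
        (g0 k s * ((C2 * Y0 / k) ^ (k / (k - 1)) * Y ^ (1 - k / (k - 1)))) with hF
  set Ne : ℝ → ℝ := fun Y => ∫ s in (1 - c0)..(1 + c0), F Y s with hNe
  have hF0 : ∀ Y s, 0 ≤ F Y s := fun Y s => mul_nonneg (chi_pos k hY0p.le).le (Gs_nonneg _ _ _ _ _)
  have hNe0 : ∀ Y, 0 ≤ Ne Y := fun Y => intervalIntegral.integral_nonneg hles fun s _ => hF0 Y s
  have hNec : ContinuousOn Ne (Set.Icc Y0 (2 * Y0)) := by
    apply param_cont _ _ _ _ hle hles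
    simp only [hF]
    apply ContinuousOn.mul
    · exact (contOn_chi k (b := 1 + c0) hY0p.le (by linarith : 0 < 1 - c0)).comp continuousOn_snd fun p hp => hp.2
    apply (continuous_Gs R _ _ _).comp_continuousOn
    have h1 : ContinuousOn (fun p : ℝ × ℝ => g0 k p.2) (Set.Icc Y0 (2 * Y0) ×ˢ Set.Icc (1 - c0) (1 + c0)) :=
      (contOn_g0 k (b := 1 + c0) (by linarith : 0 < 1 - c0)).comp continuousOn_snd fun p hp => hp.2
    have h2 : ContinuousOn (fun p : ℝ × ℝ => p.1 ^ (1 - k / (k-1))) (Set.Icc Y0 (2 * Y0) ×ˢ Set.Icc (1 - c0) (1 + c0)) :=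
      (contOn_rpow (1 - k / (k-1)) (b := 2 * Y0) hY0p).comp continuousOn_fst fun p hp => hp.1
    fun_prop
  have hempty : C2 * Y0 / M < 1 → N = ∅ := by
    intro h
    rw [hN, Nset, Nat.floor_eq_zero.mpr h]
    ext ν
    simp only [Finset.mem_filter, Finset.mem_range, Finset.notMem_empty, iff_false, not_and, not_le]
    intro hν
    have : ν = 0 := by omega
    rw [this]; push_cast; positivity
  have hfar : ∀ Y ∈ Set.Icc Y0 (2 * Y0), 1 ≤ C2 * Y0 / M → ∫ s in a..b, F Y s ≤ A * l / (K * M) + Ne Y := by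
    intro Y hY hM'
    have hii : ∀ p q, a ≤ p → p ≤ q → IntervalIntegrable (F Y) volume p q := by
      intro p q hp hpq
      apply ContinuousOn.intervalIntegrable
      rw [Set.uIcc_of_le hpq]
      exact (contOn_chi k hY0p.le (by linarith : 0 < p)).mul
        ((continuous_Gs R _ _ _).comp_continuousOn ((contOn_g0 k (by linarith : 0 < p)).mul continuousOn_const))
    have hs1 : ∫ s in a..b, F Y s = (∫ s in a..(1 - c0), F Y s) + Ne Y + ∫ s in (1 + c0)..b, F Y s := by
      rw [intervalIntegral.integral_add_adjacent_intervals (hii _ _ le_rfl hac) (hii _ _ hac hles),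
        intervalIntegral.integral_add_adjacent_intervals (hii _ _ le_rfl (by linarith)) (hii _ _ (by linarith) hcb)]
    have hcard : (N.card : ℝ) ≤ 2 * (C2 * Y0 / M) := by
      have h1 : N.card ≤ R := by
        rw [hN, Nset]; exact (Finset.card_filter_le _ _).trans (by simp [hR])
      have h2 : (R : ℝ) ≤ C2 * Y0 / M + 1 := by
        rw [hR]; push_cast; linarith [Nat.floor_le hM'p.le]
      have h3 : (N.card : ℝ) ≤ R := by exact_mod_cast h1
      linarith
    set L := l * (2 * (C2 * Y0 / M)) with hL
    have hGL : ∀ y, Gs R N (C2 * Y0 / M) (k / (k - 1)) y ≤ L := by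
      intro y
      refine (Gs_triv _ _ _ _ _).trans ?_
      rw [hL]; gcongr
    have f1 := far_bound k κ c0 Y0 L a (1 - c0) hκ hc0 hY0p ha hac
      (fun s hs => hg1 s ⟨hs.1, by linarith [hs.2]⟩)
      (fun s hs => by rw [abs_sub_comm]; exact le_trans (by linarith [hs.2]) (le_abs_self _))
      (fun s => Gs R N (C2 * Y0 / M) (k / (k - 1))
        (g0 k s * ((C2 * Y0 / k) ^ (k / (k - 1)) * Y ^ (1 - k / (k - 1)))))
      ((continuous_Gs R _ _ _).comp_continuousOn ((contOn_g0 k ha).mul continuousOn_const))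
      (fun s => Gs_nonneg _ _ _ _ _) (fun s => hGL _)
    have f2 := far_bound k κ c0 Y0 L (1 + c0) b hκ hc0 hY0p (by linarith) hcb
      (fun s hs => hg1 s ⟨by linarith [hs.1], hs.2⟩)
      (fun s hs => le_trans (by linarith [hs.1]) (le_abs_self _))
      (fun s => Gs R N (C2 * Y0 / M) (k / (k - 1))
        (g0 k s * ((C2 * Y0 / k) ^ (k / (k - 1)) * Y ^ (1 - k / (k - 1)))))
      ((continuous_Gs R _ _ _).comp_continuousOn ((contOn_g0 k (by linarith : 0 < 1 + c0)).mul continuousOn_const))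
      (fun s => Gs_nonneg _ _ _ _ _) (fun s => hGL _)
    have f3 : (1 - c0 - a) * (L / (Y0 * (κ * c0) ^ 2)) + (b - (1 + c0)) * (L / (Y0 * (κ * c0) ^ 2)) ≤ A * l / (K * M) := by
      have e1 : A * l / (K * M) = (b - a) * (L / (Y0 * (κ * c0) ^ 2)) := by
        rw [hA, hL]; field_simp
      rw [e1, ← add_mul]
      apply mul_le_mul_of_nonneg_right
      · linarith
      · rw [hL]; positivity
    rw [hs1]
    simp only [hF] at f1 f2 ⊢
    linarith
  have hpt : ∀ Y ∈ Set.Icc Y0 (2 * Y0), ‖Sw k M β w Y‖ ≤ Ce * (M / Y0 ^ 2 + 1 / M) + A * l + M * K * Ne Y := by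
    intro Y hY
    have h1 := hsw Y0 Y M hY0p hY.1 hY.2 hMp
    have h2 := hst Y0 Y M hY0p hY.1 hY.2 hMp
    have h3 : ‖Sw k M β w Y‖ ≤ Ce * (M / Y0 ^ 2 + 1 / M) + M * ‖∑ ν ∈ N, In k M α β w Y ν‖ := by
      have h4 := norm_le_norm_sub_add (Sw k M β w Y) ((M:ℂ) * ∑ ν ∈ N, In k M α β w Y ν)
      rw [norm_mul, Complex.norm_real, Real.norm_of_nonneg hMp.le] at h4
      linarith
    refine h3.trans ?_
    rw [add_assoc]
    gcongr
    rcases lt_or_ge (C2 * Y0 / M) 1 with h | h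
    · rw [hempty h]; simp
      have := hNe0 Y
      positivity
    · have h5 := hfar Y hY h
      have h6 : ‖∑ ν ∈ N, In k M α β w Y ν‖ ≤ K * (A * l / (K * M) + Ne Y) := by
        refine h2.trans ?_
        gcongr
      calc M * ‖∑ ν ∈ N, In k M α β w Y ν‖ ≤ M * (K * (A * l / (K * M) + Ne Y)) := by gcongr
        _ = _ := by field_simp
  have hNe4 : ∫ Y in Y0..(2 * Y0), Ne Y ^ 4 ≤ l ^ 4 * (Cn * C2 ^ (2 + θ) * (Y0 * (Y0 / M) ^ θ / M ^ 2)) := by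
    have hthp : 0 < (Y0 / M) ^ θ := Real.rpow_pos_of_pos (by positivity) _
    have hCp := Real.rpow_pos_of_pos hC2p (2 + θ)
    rcases lt_or_ge (C2 * Y0 / M) 1 with h | h
    · have : ∀ Y, Ne Y = 0 := by
        intro Y
        simp only [hNe, hF, hempty h, Gs]
        simp
      simp only [this]
      simp
      positivity
    · refine (hnear Y0 M hY0 hM hYM h R).trans ?_
      have e1 : (C2 * Y0 / M) ^ (2 + θ) = C2 ^ (2 + θ) * ((Y0 / M) ^ 2 * (Y0 / M) ^ θ) := by
        rw [mul_div_assoc, Real.mul_rpow hC2p.le (by positivity), Real.rpow_add (by positivity : 0 < Y0 / M)]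
        norm_num
      rw [e1]
      calc _ = (2 + Real.log R) ^ 4 * (Cn * C2 ^ (2 + θ) * (Y0 * (Y0 / M) ^ θ / M ^ 2)) := by
            field_simp
        _ ≤ _ := by gcongr
  have hi1 : IntervalIntegrable (fun Y => Ne Y ^ 4) volume Y0 (2 * Y0) := by
    apply ContinuousOn.intervalIntegrable
    rw [Set.uIcc_of_le hle]
    exact hNec.pow 4
  set x := Ce * (M / Y0 ^ 2 + 1 / M) with hx
  have hx0 : 0 ≤ x := by positivity
  have hx4 : x ^ 4 * Y0 ≤ 16 * Ce ^ 4 * M ^ 4 := by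
    have h1 : (M / Y0 ^ 2 + 1 / M) ^ 4 ≤ 8 * ((M / Y0 ^ 2) ^ 4 + (1 / M) ^ 4) := by
      have := add_pow_le (by positivity : 0 ≤ M / Y0 ^ 2) (by positivity : 0 ≤ 1 / M) 4
      norm_num at this ⊢
      linarith
    have h2 : (M / Y0 ^ 2) ^ 4 * Y0 ≤ M ^ 4 := by
      rw [div_pow, div_mul_eq_mul_div, div_le_iff₀ (by positivity)]
      have : Y0 ≤ (Y0 ^ 2) ^ 4 := by
        rw [← pow_mul]; exact le_self_pow₀ hY0 (by norm_num)
      gcongr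
    have h3 : (1 / M) ^ 4 * Y0 ≤ M ^ 4 := by
      rw [div_pow, div_mul_eq_mul_div, div_le_iff₀ (by positivity)]
      have h5 : (1:ℝ) ≤ M ^ 4 := one_le_pow₀ hM
      have h6 : M ^ 2 ≤ M ^ 4 := pow_le_pow_right₀ hM (by norm_num)
      nlinarith
    calc x ^ 4 * Y0 = Ce ^ 4 * ((M / Y0 ^ 2 + 1 / M) ^ 4 * Y0) := by rw [hx]; ring
      _ ≤ Ce ^ 4 * (8 * ((M / Y0 ^ 2) ^ 4 + (1 / M) ^ 4) * Y0) := by gcongr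
      _ ≤ Ce ^ 4 * (16 * M ^ 4) := mul_le_mul_of_nonneg_left (by linarith) (by positivity)
      _ = _ := by ring
  calc ∫ Y in Y0..(2 * Y0), ‖Sw k M β w Y‖ ^ 4
      ≤ ∫ Y in Y0..(2 * Y0), (27 * (x ^ 4 + (A * l) ^ 4) + 27 * (M * K) ^ 4 * Ne Y ^ 4) := by
        apply intervalIntegral.integral_mono_on hle
        · exact ((continuous_Sw k M β w).norm.pow 4).intervalIntegrable _ _
        · exact intervalIntegrable_const.add (hi1.const_mul _)
        · intro Y hY
          calc _ ≤ (x + A * l + M * K * Ne Y) ^ 4 := by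
                gcongr; exact hpt Y hY
            _ ≤ _ := pow4_three _ _ _
            _ = _ := by ring
    _ = 27 * (x ^ 4 * Y0 + (A * l) ^ 4 * Y0) + 27 * (M * K) ^ 4 * ∫ Y in Y0..(2 * Y0), Ne Y ^ 4 := by
        rw [intervalIntegral.integral_add intervalIntegrable_const (hi1.const_mul _), intervalIntegral.integral_const,
          intervalIntegral.integral_const_mul, smul_eq_mul]
        ring
    _ ≤ 27 * (16 * Ce ^ 4 * M ^ 4 * l ^ 4 + A ^ 4 * l ^ 4 * M ^ 4) + 27 * (M * K) ^ 4 * (l ^ 4 * (Cn * C2 ^ (2 + θ) * (Y0 * (Y0 / M) ^ θ / M ^ 2))) := by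
        have hl4 : 1 ≤ l ^ 4 := one_le_pow₀ (by linarith)
        have hM24 : M ^ 2 ≤ M ^ 4 := pow_le_pow_right₀ hM (by norm_num)
        gcongr ?_ + _ * ?_
        gcongr 27 * (?_ + ?_)
        · refine hx4.trans ?_
          exact le_mul_of_one_le_right (by positivity) hl4
        · rw [mul_pow]; gcongr; linarith
    _ ≤ _ := by
        have hthp : 0 < (Y0 / M) ^ θ := Real.rpow_pos_of_pos (by positivity) _
        have hCp := Real.rpow_pos_of_pos hC2p (2 + θ)
        have e1 : 27 * (M * K) ^ 4 * (l ^ 4 * (Cn * C2 ^ (2 + θ) * (Y0 * (Y0 / M) ^ θ / M ^ 2))) =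
          27 * K ^ 4 * Cn * C2 ^ (2 + θ) * l ^ 4 * (M ^ 2 * Y0 * (Y0 / M) ^ θ) := by field_simp
        rw [e1]
        have p1 : 0 ≤ 27 * (16 * Ce ^ 4 + A ^ 4) * l ^ 4 * (M ^ 2 * Y0 * (Y0 / M) ^ θ) := by positivity
        have p2 : 0 ≤ 27 * K ^ 4 * Cn * C2 ^ (2 + θ) * l ^ 4 * M ^ 4 := by positivity
        nlinarith


lemma log_pow_bound (A ρ : ℝ) (hA : 0 ≤ A) (hρ : 0 < ρ) :
    ∃ C > 0, ∀ M : ℝ, 1 ≤ M → 2 + Real.log (A * M + 1) ≤ C * M ^ ρ := by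
  have h0 : 0 ≤ Real.log (A + 1) := Real.log_nonneg (by linarith)
  refine ⟨2 + Real.log (A + 1) + 1 / ρ, by positivity, ?_⟩
  intro M hM
  have h1 : Real.log (A * M + 1) ≤ Real.log (A + 1) + Real.log M := by
    rw [← Real.log_mul (by linarith) (by linarith)]
    apply Real.log_le_log (by nlinarith)
    nlinarith
  have h2 := Real.log_le_rpow_div (by linarith : 0 ≤ M) hρ
  have h3 : 1 ≤ M ^ ρ := Real.one_le_rpow hM hρ.le
  have h4 : M ^ ρ / ρ = 1 / ρ * M ^ ρ := by ring
  nlinarith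

lemma dyadic_sum (f : ℝ → ℝ) (hf : Continuous f) (hf0 : ∀ x, 0 ≤ f x) (D T : ℝ) (hT : 1 ≤ T)
    (h1 : ∫ x in (0:ℝ)..1, f x ≤ D) (h2 : ∀ Y, 1 ≤ Y → Y ≤ T → ∫ x in Y..(2 * Y), f x ≤ D) :
    ∫ x in (0:ℝ)..T, f x ≤ (2 + 2 * Real.log T) * D := by
  have hD : 0 ≤ D := (intervalIntegral.integral_nonneg zero_le_one fun x _ => hf0 x).trans h1
  have ii : ∀ p q, IntervalIntegrable f volume p q := fun p q => hf.intervalIntegrable p q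
  have key : ∀ j : ℕ, (2:ℝ) ^ j ≤ T → ∫ x in (0:ℝ)..(2 ^ (j + 1)), f x ≤ (j + 2) * D := by
    intro j
    induction j with
    | zero =>
      intro _
      have := h2 1 le_rfl hT
      rw [← intervalIntegral.integral_add_adjacent_intervals (ii 0 1) (ii 1 _)]
      norm_num at this ⊢
      linarith
    | succ j ih =>
      intro h
      have h3 : (2:ℝ) ^ j ≤ T := le_trans (pow_le_pow_right₀ (by norm_num) (by omega)) h
      have h4 := ih h3
      have h5 := h2 (2 ^ (j + 1)) (one_le_pow₀ (by norm_num)) h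
      rw [← pow_succ'] at h5
      rw [← intervalIntegral.integral_add_adjacent_intervals (ii 0 (2 ^ (j + 1))) (ii _ _)]
      push_cast
      linarith
  have hfl : ⌊T⌋₊ ≠ 0 := by
    have := Nat.le_floor (n := 1) (a := T) (by simpa using hT)
    omega
  set J := Nat.log 2 ⌊T⌋₊ with hJ
  have h3 : (2:ℝ) ^ J ≤ T := by
    have := Nat.pow_log_le_self 2 hfl
    calc (2:ℝ) ^ J ≤ (⌊T⌋₊ : ℝ) := by exact_mod_cast this
      _ ≤ T := Nat.floor_le (by linarith)
  have h4 : T ≤ 2 ^ (J + 1) := by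
    have h5 := Nat.lt_pow_succ_log_self (b := 2) (by norm_num) ⌊T⌋₊
    have h6 : ((⌊T⌋₊ + 1 : ℕ) : ℝ) ≤ ((2 ^ (J + 1) : ℕ) : ℝ) := by exact_mod_cast h5
    push_cast at h6
    linarith [Nat.lt_floor_add_one T]
  have h5 : (J : ℝ) ≤ 2 * Real.log T := by
    have h6 := Real.log_le_log (by positivity) h3
    rw [Real.log_pow] at h6
    have h7 := Real.log_two_gt_d9
    have h8 : (0:ℝ) ≤ J := Nat.cast_nonneg _
    nlinarith
  calc ∫ x in (0:ℝ)..T, f x ≤ ∫ x in (0:ℝ)..(2 ^ (J + 1)), f x := by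
        rw [← intervalIntegral.integral_add_adjacent_intervals (ii 0 T) (ii T (2 ^ (J + 1)))]
        have := intervalIntegral.integral_nonneg h4 (μ := volume) fun x _ => hf0 x
        linarith
    _ ≤ _ := key J h3
    _ ≤ _ := mul_le_mul_of_nonneg_right (by linarith) hD

lemma norm_Sw_le {α β : ℝ} {w w1 w2 : ℝ → ℝ} {W : ℝ} (B : Bump α β w w1 w2 W) (k M Y : ℝ) :
    ‖Sw k M β w Y‖ ≤ (⌊β * M⌋₊ + 1) * W := by
  unfold Sw
  refine (norm_sum_le _ _).trans ?_
  calc _ ≤ ∑ m ∈ Finset.range (⌊β * M⌋₊ + 1), W := by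
        gcongr with m hm
        rw [norm_mul, norm_e, mul_one, Complex.norm_real]
        exact B.b0 _
    _ = _ := by simp

lemma claim_step (k θ θ' : ℝ) (hk : 1 < k) (hθ : 0 < θ) (hθ' : θ / (1 + θ) < θ') (hCl : Claim θ (k / (k - 1))) :
    Claim θ' k := by
  intro c hc0 hc1
  obtain ⟨w, w1, w2, W, B, hw1, hw0⟩ := exists_bump c hc0 hc1
  obtain ⟨C, hC, hdy⟩ := dyadic B k θ hk hCl
  set η := θ / (1 + θ) with hη
  have hη0 : 0 < η := by positivity
  have hη1 : η < 1 := by rw [hη, div_lt_one (by linarith)]; linarith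
  set C2 : ℝ := 4 * k * 2 ^ (k - 1) with hC2
  have hC2p : 0 ≤ C2 := by positivity
  set ρ := (θ' - η) / 5 with hρ
  have hρ0 : 0 < ρ := by rw [hρ]; linarith
  obtain ⟨E, hE, hlog⟩ := log_pow_bound C2 ρ hC2p hρ0
  obtain ⟨E', hE', hlog'⟩ := log_pow_bound 1 ρ zero_le_one hρ0
  have hWn := B.hW
  refine ⟨16 * (4 * E') * (2 * C * E ^ 4 + 81 * W ^ 4), by positivity, ?_⟩
  intro M hM
  have hMp : 0 < M := by linarith
  set S := (Finset.range (⌊M⌋₊ + 1)).filter (fun m : ℕ => c * M ≤ m) with hS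
  set T0 := M ^ (2 - η) with hT0
  have hT01 : 1 ≤ T0 := Real.one_le_rpow hM (by linarith)
  have hT0M : T0 ≤ M ^ 2 := by
    rw [hT0, ← Real.rpow_natCast]
    apply Real.rpow_le_rpow_of_exponent_le hM
    push_cast; linarith
  have hT0p : 0 < T0 := by linarith
  have hsub : S ⊆ Finset.range (⌊2 * M⌋₊ + 1) := by
    intro m hm
    rw [hS, Finset.mem_filter, Finset.mem_range] at hm
    rw [Finset.mem_range]
    have : ⌊M⌋₊ ≤ ⌊2 * M⌋₊ := Nat.floor_mono (by linarith)
    omega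
  have hmaj := majorant (Finset.range (⌊2 * M⌋₊ + 1)) (fun m : ℕ => ((m:ℝ) / M) ^ k)
    (fun m => if m ∈ S then 1 else 0) (fun m : ℕ => w (m / M)) (by
      intro m _
      by_cases hm : m ∈ S
      · rw [if_pos hm, norm_one]
        rw [hS, Finset.mem_filter, Finset.mem_range] at hm
        rw [hw1]
        · rw [le_div_iff₀ hMp]; exact hm.2
        · rw [div_le_one hMp]
          calc (m:ℝ) ≤ (⌊M⌋₊ : ℝ) := by exact_mod_cast (by omega : m ≤ ⌊M⌋₊)
            _ ≤ M := Nat.floor_le hMp.le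
      · rw [if_neg hm, norm_zero]; exact hw0 _) 0 (M ^ 2) T0 hT0p (by positivity)
  have hsumS : ∀ y : ℝ, ∑ m ∈ Finset.range (⌊2 * M⌋₊ + 1), (if m ∈ S then (1:ℂ) else 0) * e (((m:ℝ) / M) ^ k * y) =
      ∑ m ∈ S, e (((m:ℝ) / M) ^ k * y) := by
    intro y
    simp only [ite_mul, one_mul, zero_mul]
    rw [← Finset.sum_filter, Finset.filter_mem_eq_inter, Finset.inter_eq_right.mpr hsub]
  simp only [hsumS] at hmaj
  have hMρ : 1 ≤ M ^ ρ := Real.one_le_rpow hM hρ0.le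
  have hMη : 1 ≤ M ^ η := Real.one_le_rpow hM hη0.le
  set D := (2 * C * E ^ 4 + 81 * W ^ 4) * ((M ^ ρ) ^ 4 * M ^ 4) with hD
  have hDY : ∀ Y, 1 ≤ Y → Y ≤ T0 → ∫ x in Y..(2 * Y), ‖Sw k M 2 w x‖ ^ 4 ≤ D := by
    intro Y hY1 hYT
    refine (hdy M Y hM hY1 (hYT.trans hT0M) _ le_rfl).trans ?_
    have h1 : M ^ 2 * Y * (Y / M) ^ θ ≤ M ^ 4 := by
      have h2 : Y * (Y / M) ^ θ ≤ T0 * (T0 / M) ^ θ := by gcongr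
      have h3 : T0 * (T0 / M) ^ θ = M ^ 2 := by
        rw [hT0, ← Real.rpow_sub_one hMp.ne', ← Real.rpow_mul hMp.le, ← Real.rpow_add hMp, ← Real.rpow_natCast]
        congr 1
        rw [hη]; field_simp; push_cast; ring
      calc M ^ 2 * Y * (Y / M) ^ θ = M ^ 2 * (Y * (Y / M) ^ θ) := by ring
        _ ≤ M ^ 2 * M ^ 2 := by rw [← h3] at *; gcongr
        _ = M ^ 4 := by ring
    have hl0 : 0 ≤ 2 + Real.log (C2 * M + 1) := by
      have : 0 ≤ Real.log (C2 * M + 1) := Real.log_nonneg (by nlinarith)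
      linarith
    calc _ ≤ C * (E * M ^ ρ) ^ 4 * (M ^ 4 + M ^ 4) := by
          gcongr
          exact hlog M hM
      _ = 2 * C * E ^ 4 * ((M ^ ρ) ^ 4 * M ^ 4) := by ring
      _ ≤ D := by
          rw [hD]
          gcongr
          have : 0 ≤ W ^ 4 := by positivity
          linarith
  have hD1 : ∫ x in (0:ℝ)..1, ‖Sw k M 2 w x‖ ^ 4 ≤ D := by
    have hb : ∀ x, ‖Sw k M 2 w x‖ ^ 4 ≤ 81 * W ^ 4 * M ^ 4 := by
      intro x
      have h1 := norm_Sw_le B k M x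
      have h2 := Nat.floor_le (by linarith : 0 ≤ 2 * M)
      calc ‖Sw k M 2 w x‖ ^ 4 ≤ ((3 * M) * W) ^ 4 := by
            gcongr
            refine h1.trans ?_
            gcongr
            linarith
        _ = _ := by ring
    calc _ ≤ ∫ x in (0:ℝ)..1, 81 * W ^ 4 * M ^ 4 := by
          apply intervalIntegral.integral_mono_on zero_le_one
          · exact ((continuous_Sw k M 2 w).norm.pow 4).intervalIntegrable _ _
          · exact intervalIntegrable_const
          · intro x _; exact hb x
      _ = 81 * W ^ 4 * (1 * M ^ 4) := by simp
      _ ≤ D := by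
          rw [hD]
          gcongr
          · have : 0 ≤ 2 * C * E ^ 4 := by positivity
            linarith
          · exact one_le_pow₀ hMρ
  have hsum := dyadic_sum (fun x => ‖Sw k M 2 w x‖ ^ 4) ((continuous_Sw k M 2 w).norm.pow 4)
    (fun x => by positivity) D T0 hT01 hD1 hDY
  have hlogT : 2 + 2 * Real.log T0 ≤ 4 * (E' * M ^ ρ) := by
    have h1 := hlog' M hM
    have h2 : Real.log M ≤ Real.log (1 * M + 1) := Real.log_le_log hMp (by linarith)
    have h3 : Real.log T0 = (2 - η) * Real.log M := Real.log_rpow hMp _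
    have h4 : 0 ≤ Real.log M := Real.log_nonneg hM
    rw [h3]
    nlinarith
  have hq : (M ^ 2 - 0) / T0 + 1 ≤ 2 * M ^ η := by
    have : M ^ 2 / T0 = M ^ η := by
      rw [hT0, ← Real.rpow_natCast, ← Real.rpow_sub hMp]
      congr 1; push_cast; ring
    rw [sub_zero, this]; linarith
  have hD0 : 0 ≤ D := by rw [hD]; positivity
  have hprodC : 0 ≤ ∫ y in (0:ℝ)..T0, ‖Sw k M 2 w y‖ ^ 4 :=
    intervalIntegral.integral_nonneg hT0p.le fun x _ => by positivity
  refine hmaj.trans ?_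
  calc _ = 8 * ((M ^ 2 - 0) / T0 + 1) * ∫ y in (0:ℝ)..T0, ‖Sw k M 2 w y‖ ^ 4 := rfl
    _ ≤ 8 * (2 * M ^ η) * (4 * (E' * M ^ ρ) * D) := by
        gcongr
        exact hsum.trans (by gcongr)
    _ = 16 * (4 * E') * (2 * C * E ^ 4 + 81 * W ^ 4) * (M ^ η * (M ^ ρ) ^ 5 * M ^ 4) := by rw [hD]; ring
    _ = _ := by
        congr 1
        rw [← Real.rpow_natCast (M ^ ρ), ← Real.rpow_mul hMp.le, ← Real.rpow_natCast M, ← Real.rpow_add hMp, ← Real.rpow_add hMp]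
        congr 1
        rw [hρ]; push_cast; ring

lemma claim_mono (k θ θ' : ℝ) (h : θ ≤ θ') (hCl : Claim θ k) : Claim θ' k := by
  intro c h0 h1
  obtain ⟨C, hC, H⟩ := hCl c h0 h1
  refine ⟨C, hC, fun M hM => (H M hM).trans ?_⟩
  gcongr

lemma claim_two (k : ℝ) : Claim 2 k := by
  intro c h0 h1
  refine ⟨16, by norm_num, fun M hM => ?_⟩
  have hMp : 0 < M := by linarith
  set S := (Finset.range (⌊M⌋₊ + 1)).filter (fun m : ℕ => c * M ≤ m) with hS
  have hcard : (S.card : ℝ) ≤ 2 * M := by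
    have h1 : S.card ≤ ⌊M⌋₊ + 1 := (Finset.card_filter_le _ _).trans (by simp)
    have h2 : (S.card : ℝ) ≤ ⌊M⌋₊ + 1 := by exact_mod_cast h1
    linarith [Nat.floor_le hMp.le]
  have hc : Continuous fun y : ℝ => ‖∑ m ∈ S, e (((m : ℝ) / M) ^ k * y)‖ ^ 4 := by
    have := continuous_e
    fun_prop
  calc _ ≤ ∫ y in (0:ℝ)..(M ^ 2), (2 * M) ^ 4 := by
        apply intervalIntegral.integral_mono_on (by positivity) (hc.intervalIntegrable _ _) intervalIntegrable_const
        intro y _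
        gcongr
        refine (norm_sum_le _ _).trans ?_
        simpa [norm_e] using hcard
    _ = 16 * M ^ 6 := by rw [intervalIntegral.integral_const, smul_eq_mul]; ring
    _ = _ := by
        congr 1
        rw [← Real.rpow_natCast]; norm_num

lemma claim_seq (j : ℕ) : ∀ k : ℝ, 1 < k → Claim (4 / ((j : ℝ) + 2)) k := by
  induction j with
  | zero => intro k _; have := claim_two k; norm_num; exact this
  | succ j ih =>
    intro k hk
    have hk1 : 0 < k - 1 := by linarith
    apply claim_step k (4 / ((j : ℝ) + 2)) _ hk (by positivity)
    · rw [show 4 / ((j:ℝ) + 2) / (1 + 4 / ((j:ℝ) + 2)) = 4 / ((j:ℝ) + 6) by field_simp; ring]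
      push_cast
      apply div_lt_div_of_pos_left <;> linarith [Nat.cast_nonneg (α := ℝ) j]
    · apply ih
      rw [lt_div_iff₀ hk1]; linarith

lemma claim_all (k θ : ℝ) (hk : 1 < k) (hθ : 0 < θ) : Claim θ k := by
  obtain ⟨j, hj⟩ := exists_nat_gt (4 / θ)
  refine claim_mono k _ θ ?_ (claim_seq j k hk)
  rw [div_lt_iff₀ hθ] at hj
  rw [div_le_iff₀ (by positivity)]
  nlinarith


theorem Sk_fourth_moment_unit (k δ ε : ℝ) (hk : 1 < k) (hδ0 : 0 < δ) (hδ1 : δ < 1) (hε : 0 < ε) :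
    ∃ C > 0, ∀ X ≥ (2 : ℝ), ∀ n : ℕ,
      ∫ α in (n : ℝ)..((n : ℝ) + 1), ‖Sk δ X k α‖ ^ 4
        ≤ C * (X ^ (2 / k) + X ^ (4 / k - 1)) * X ^ ε := by
  have hkp : 0 < k := by linarith
  set c := δ ^ (1 / k) with hc
  have hc0 : 0 < c := Real.rpow_pos_of_pos hδ0 _
  have hc1 : c < 1 := Real.rpow_lt_one hδ0.le hδ1 (by positivity)
  obtain ⟨C, hC, H⟩ := claim_all k (k * (ε / 2)) hk (by positivity) c hc0 hc1
  refine ⟨8 * C * (8 / ε) ^ 4, by positivity, ?_⟩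
  intro X hX n
  have hXp : 0 < X := by linarith
  set M := X ^ (1 / k) with hM
  have hM1 : 1 ≤ M := Real.one_le_rpow (by linarith) (by positivity)
  have hMp : 0 < M := by linarith
  have hMk : M ^ k = X := by
    rw [hM, ← Real.rpow_mul hXp.le, one_div_mul_cancel hkp.ne', Real.rpow_one]
  have hlog0 : 0 ≤ Real.log X := Real.log_nonneg (by linarith)
  have HM := H M hM1
  set A := (Finset.range (⌊M⌋₊ + 1)).filter (fun m : ℕ => c * M ≤ m) with hA
  set P := (Finset.Icc 1 (Nat.floor X)).filter
      (fun p : ℕ => p.Prime ∧ δ * X ≤ (p : ℝ) ^ k ∧ (p : ℝ) ^ k ≤ X) with hP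
  have hPA : P ⊆ A := by
    intro p hp
    rw [hP, Finset.mem_filter] at hp
    obtain ⟨_, _, h1, h2⟩ := hp
    have hp0 : (0:ℝ) ≤ p := Nat.cast_nonneg p
    rw [hA, Finset.mem_filter, Finset.mem_range]
    constructor
    · rw [Nat.lt_succ_iff]
      apply Nat.le_floor
      rw [← hMk] at h2
      exact (Real.rpow_le_rpow_iff hp0 hMp.le hkp).mp h2
    · rw [← Real.rpow_le_rpow_iff (by positivity) hp0 hkp, Real.mul_rpow hc0.le hMp.le, hMk, hc,
        ← Real.rpow_mul hδ0.le, one_div_mul_cancel hkp.ne', Real.rpow_one]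
      exact h1
  have hT : 0 < M ^ 2 / X := by positivity
  have hmaj := majorant A (fun m : ℕ => (m:ℝ) ^ k) (fun m => if m ∈ P then (Real.log m : ℂ) else 0)
    (fun _ => Real.log X) (by
      intro m _
      by_cases hm : m ∈ P
      · rw [if_pos hm]
        rw [hP, Finset.mem_filter, Finset.mem_Icc] at hm
        have h1 : (1:ℝ) ≤ m := by exact_mod_cast hm.1.1
        have h2 : (m:ℝ) ≤ X := (Nat.cast_le.mpr hm.1.2).trans (Nat.floor_le hXp.le)
        rw [Complex.norm_real, Real.norm_of_nonneg (Real.log_nonneg h1)]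
        exact Real.log_le_log (by linarith) h2
      · rw [if_neg hm, norm_zero]; exact hlog0) n (n + 1) (M ^ 2 / X) hT (by linarith)
  have hsumS : ∀ y : ℝ, ∑ m ∈ A, (if m ∈ P then (Real.log m : ℂ) else 0) * e ((m:ℝ) ^ k * y) = Sk δ X k y := by
    intro y
    simp only [ite_mul, zero_mul]
    rw [← Finset.sum_filter, Finset.filter_mem_eq_inter, Finset.inter_eq_right.mpr hPA, Sk]
  simp only [hsumS] at hmaj
  have hre : ∫ y in (0:ℝ)..(M ^ 2 / X), ‖∑ a ∈ A, (Real.log X : ℂ) * e ((a:ℝ) ^ k * y)‖ ^ 4 =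
      Real.log X ^ 4 * (X⁻¹ * ∫ y in (0:ℝ)..(M ^ 2), ‖∑ m ∈ A, e (((m : ℝ) / M) ^ k * y)‖ ^ 4) := by
    have h1 : ∀ y : ℝ, ‖∑ a ∈ A, (Real.log X : ℂ) * e ((a:ℝ) ^ k * y)‖ ^ 4 =
        Real.log X ^ 4 * ‖∑ m ∈ A, e (((m : ℝ) / M) ^ k * (X * y))‖ ^ 4 := by
      intro y
      rw [← Finset.mul_sum, norm_mul, Complex.norm_real, Real.norm_of_nonneg hlog0, mul_pow]
      congr 4
      funext m
      rw [Real.div_rpow (Nat.cast_nonneg m) hMp.le, hMk]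
      congr 1
      field_simp
    simp only [h1]
    rw [intervalIntegral.integral_const_mul,
      intervalIntegral.integral_comp_mul_left (fun y => ‖∑ m ∈ A, e (((m : ℝ) / M) ^ k * y)‖ ^ 4) hXp.ne',
      smul_eq_mul, mul_zero, mul_div_cancel₀ _ hXp.ne']
  rw [hre] at hmaj
  have hlog : Real.log X ^ 4 ≤ (8 / ε) ^ 4 * X ^ (ε / 2) := by
    have h1 := Real.log_le_rpow_div hXp.le (by positivity : 0 < ε / 8)
    calc Real.log X ^ 4 ≤ (X ^ (ε / 8) / (ε / 8)) ^ 4 := by gcongr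
      _ = (8 / ε) ^ 4 * (X ^ (ε / 8)) ^ 4 := by field_simp
      _ = _ := by
          rw [← Real.rpow_natCast (X ^ (ε / 8)), ← Real.rpow_mul hXp.le]
          congr 2; push_cast; ring
  have hMθ : M ^ (4 + k * (ε / 2)) = M ^ 4 * X ^ (ε / 2) := by
    rw [Real.rpow_add hMp, Real.rpow_mul hMp.le, hMk]
    norm_num
  have hM2 : M ^ 2 = X ^ (2 / k) := by
    rw [hM, ← Real.rpow_natCast, ← Real.rpow_mul hXp.le]
    congr 1; push_cast; ring
  have hM4 : M ^ 4 / X = X ^ (4 / k - 1) := by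
    rw [hM, ← Real.rpow_natCast, ← Real.rpow_mul hXp.le, Real.rpow_sub_one hXp.ne']
    congr 2; push_cast; ring
  have hXX : X ^ (ε / 2) * X ^ (ε / 2) = X ^ ε := by
    rw [← Real.rpow_add hXp]; congr 1; ring
  refine hmaj.trans ?_
  calc _ ≤ 8 * ((n + 1 - n) / (M ^ 2 / X) + 1) * (((8 / ε) ^ 4 * X ^ (ε / 2)) * (X⁻¹ * (C * M ^ (4 + k * (ε / 2))))) := by
        have hq : (0:ℝ) ≤ (n + 1 - n) / (M ^ 2 / X) := div_nonneg (by linarith) hT.le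
        have h0 : 0 ≤ ∫ y in (0:ℝ)..(M ^ 2), ‖∑ m ∈ A, e (((m : ℝ) / M) ^ k * y)‖ ^ 4 :=
          intervalIntegral.integral_nonneg (by positivity) fun x _ => by positivity
        gcongr
    _ = 8 * C * (8 / ε) ^ 4 * (M ^ 2 + M ^ 4 / X) * (X ^ (ε / 2) * X ^ (ε / 2)) := by
        rw [hMθ, add_sub_cancel_left]
        field_simp
    _ = _ := by rw [hXX, hM2, hM4]
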